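/- For every ε > 0 there exist δ > 0 and c > 0, depending only on ε, such that for every odd prime p, every A ⊆ F_p, and all sets B1, B2, B3 ⊆ F_p with |B1| = |B2| = |B3| = n, n > p^ε, and |B3 − B1·B2| ≤ n²·p^{−ε}, one has |{ (a+b1)/(a·b2+b3) : a∈A, b1∈B1, b2∈B2, b3∈B3, a·b2+b3 ≠ 0 }| ≥ c·min{ p, |A|·p^δ }. -/

import Mathlib

open Finset

/-- The product set `S·T = {s·t : s ∈ S, t ∈ T}`. -/
def prodSet (p : ℕ) (S T : Finset (ZMod p)) : Finset (ZMod p) :=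
  (S ×ˢ T).image fun x => x.1 * x.2

/-- The difference set `S − T = {s − t : s ∈ S, t ∈ T}`. -/
def diffSet (p : ℕ) (S T : Finset (ZMod p)) : Finset (ZMod p) :=
  (S ×ˢ T).image fun x => x.1 - x.2

/-!
Fix `r ∈ B₁`. With `x = (a + r)⁻¹`, the inverse of `(a + r) / (a * b₂ + b₃)` becomes
`(b₃ - r * b₂) * x + b₂`, so it is enough to bound from below the union of the images of a set
under the affine maps with these parameters. By Cauchy–Schwarz such a bound follows once the average
`T` over these maps contracts the `ℓ²` norm of mean-zero functions by a power of `p`.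

On the Fourier side `T` is an average over the dilations by the slopes, twisted by the Fourier
coefficients of the intercepts of each slope. As there are few slopes, a typical slope has many
intercepts, and its Fourier coefficients are small on average over any well-distributed set of
frequencies. A high power of `T T*` spreads a frequency along a multiplicative random walk driven by
quotients of slopes, and the walk is well distributed by the Bourgain–Glibichuk–Konyagin
exponential sum estimate, because no slope carries a mass larger than a negative power of `p`.

That estimate rests on `ℓ²` flattening. If a multiplicative convolution `σ * ν` had large additive
energy, the Balog–Szemerédi–Gowers theorem would give a set `H` with `H - ρ H` small for many `ρ`.
The scalars with this property are almost closed under the field operations, hence exhaust `F_p`,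
which is only possible if `H` is almost a point or almost everything.
-/

open scoped Pointwise Combinatorics.Additive

/-! ### The Balog–Szemerédi–Gowers theorem -/

section BalogSzemerediGowers

variable {G : Type*} [AddCommGroup G] [DecidableEq G]

/-- The intersection of `E` with its translate by `x`. Its cardinality is the number of
representations of `x` as a difference of two elements of `E`. -/
def shiftInter (E : Finset G) (x : G) : Finset G := {a ∈ E | a - x ∈ E}

theorem mem_shiftInter {E : Finset G} {x a : G} : a ∈ shiftInter E x ↔ a ∈ E ∧ a - x ∈ E :=
  mem_filter

theorem shiftInter_subset (E : Finset G) (x : G) : shiftInter E x ⊆ E := filter_subset _ _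

theorem card_shiftInter_eq_card_filter_sub (E : Finset G) (x : G) :
    #(shiftInter E x) = #{q ∈ E ×ˢ E | q.1 - q.2 = x} := by
  refine card_bij' (fun a _ => (a, a - x)) (fun q _ => q.1) ?_ ?_ ?_ ?_
  · intro a ha
    simpa [mem_shiftInter] using ha
  · rintro ⟨a, b⟩ hq
    obtain ⟨⟨ha, hb⟩, rfl⟩ : (a ∈ E ∧ b ∈ E) ∧ a - b = x := by simpa using hq
    simpa [mem_shiftInter] using ⟨ha, hb⟩
  · simp
  · rintro ⟨a, b⟩ hq
    obtain ⟨-, rfl⟩ : (a ∈ E ∧ b ∈ E) ∧ a - b = x := by simpa using hq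
    simp

theorem card_filter_sub_mem_shiftInter [Fintype G] (E : Finset G) (a b : G) :
    #{x | a - x ∈ E ∧ b - x ∈ E} = #(shiftInter E (a - b)) := by
  refine card_equiv (Equiv.subLeft a) fun x => ?_
  simp [mem_shiftInter]

theorem sum_card_shiftInter [Fintype G] (E : Finset G) : ∑ x, #(shiftInter E x) = #E ^ 2 := by
  simp_rw [card_shiftInter_eq_card_filter_sub]
  rw [← card_eq_sum_card_fiberwise fun _ _ => mem_univ _, card_product, sq]

theorem sum_card_shiftInter_sq [Fintype G] (E : Finset G) :
    ∑ x, #(shiftInter E x) ^ 2 = E[E] := by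
  have fibre (x : G) : #(shiftInter E x) ^ 2 =
      #{z ∈ {z ∈ (E ×ˢ E) ×ˢ (E ×ˢ E) | z.1.1 - z.1.2 = z.2.2 - z.2.1} |
        z.1.1 - z.1.2 = x} := by
    have swap : #{q ∈ E ×ˢ E | q.1 - q.2 = x} = #{q ∈ E ×ˢ E | q.2 - q.1 = x} :=
      card_equiv (Equiv.prodComm G G) fun q => by simp [and_comm]
    rw [card_shiftInter_eq_card_filter_sub, sq]
    nth_rewrite 2 [swap]
    rw [← card_product, ← filter_product, filter_filter]
    refine congrArg _ (filter_congr fun z _ => ?_)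
    grind
  simp_rw [fibre]
  rw [← card_eq_sum_card_fiberwise fun _ _ => mem_univ _, addEnergy]
  refine congrArg _ (filter_congr fun z _ => ?_)
  rw [sub_eq_sub_iff_add_eq_add, add_comm z.2.2]

theorem addEnergy_self_le_card_pow (E : Finset G) : E[E] ≤ #E ^ 3 := by
  rw [pow_succ, sq, ← card_product, ← card_product]
  refine card_le_card_of_injOn (fun z => (z.1, z.2.1)) ?_ ?_
  · intro z hz
    simp only [coe_filter, mem_product] at hz
    simpa using ⟨hz.1.1, hz.1.2.1⟩
  · rintro ⟨⟨a, b⟩, c, d⟩ hz ⟨⟨a', b'⟩, c', d'⟩ hz' heq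
    obtain ⟨⟨rfl, rfl⟩, rfl⟩ := by simpa only [Prod.mk.injEq] using heq
    have hd : d = d' := add_left_cancel ((mem_filter.1 hz).2.symm.trans (mem_filter.1 hz').2)
    rw [hd]

theorem sum_card_shiftInter_product_filter [Fintype G] (E : Finset G) (R : G × G → Prop)
    [DecidablePred R] :
    ∑ x, #{q ∈ shiftInter E x ×ˢ shiftInter E x | R q} =
      ∑ q ∈ E ×ˢ E with R q, #(shiftInter E (q.1 - q.2)) := by
  have fibre (x : G) : #{q ∈ shiftInter E x ×ˢ shiftInter E x | R q} =
      ∑ q ∈ E ×ˢ E with R q, if q.1 - x ∈ E ∧ q.2 - x ∈ E then 1 else 0 := by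
    rw [← card_filter, filter_filter]
    congr 1
    ext q
    simp only [mem_filter, mem_product, mem_shiftInter]
    tauto
  simp_rw [fibre]
  rw [sum_comm]
  simp_rw [← card_filter, card_filter_sub_mem_shiftInter]

/-- The pairs of `F` whose difference has fewer than `τ` representations in `E - E`. -/
noncomputable def unpopularPairs (E F : Finset G) (τ : ℝ) : Finset (G × G) :=
  {q ∈ F ×ˢ F | (#(shiftInter E (q.1 - q.2)) : ℝ) < τ}

theorem sum_card_unpopularPairs_shiftInter_le [Fintype G] (E : Finset G) {τ : ℝ} (hτ : 0 ≤ τ) :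
    ∑ x, (#(unpopularPairs E (shiftInter E x) τ) : ℝ) ≤ τ * #E ^ 2 := by
  calc ∑ x, (#(unpopularPairs E (shiftInter E x) τ) : ℝ)
      = ∑ q ∈ unpopularPairs E E τ, (#(shiftInter E (q.1 - q.2)) : ℝ) :=
        mod_cast sum_card_shiftInter_product_filter E _
    _ ≤ #(unpopularPairs E E τ) • τ := sum_le_card_nsmul _ _ _ fun q hq => (mem_filter.1 hq).2.le
    _ ≤ #(E ×ˢ E) • τ := nsmul_le_nsmul_left hτ (card_le_card (filter_subset _ _))
    _ = τ * #E ^ 2 := by rw [card_product, nsmul_eq_mul]; push_cast; ring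

theorem exists_shift_few_unpopularPairs [Finite G] {E : Finset G} {K : ℝ} (hK : 0 < K)
    (hE : E.Nonempty) (hEK : (#E : ℝ) ^ 3 ≤ K * E[E]) :
    ∃ x, #E / (4 * K) < #(shiftInter E x) ∧
      16 * (#(unpopularPairs E (shiftInter E x) (#E / (32 * K))) : ℝ) ≤
        #(shiftInter E x) ^ 2 := by
  cases nonempty_fintype G
  set N : ℝ := (#E : ℝ)
  set r : G → ℝ := fun x => #(shiftInter E x)
  set bad : G → ℝ := fun x => #(unpopularPairs E (shiftInter E x) (N / (32 * K)))
  have hN : 0 < N := Nat.cast_pos.2 hE.card_pos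
  have sum_r : ∑ x, r x = N ^ 2 := by
    simp only [r, N]
    exact_mod_cast sum_card_shiftInter E
  have sum_r_sq : ∑ x, r x ^ 2 = E[E] := by
    simp only [r]
    exact_mod_cast sum_card_shiftInter_sq E
  have sum_bad : ∑ x, bad x ≤ N / (32 * K) * N ^ 2 :=
    sum_card_unpopularPairs_shiftInter_le E (by positivity)
  obtain ⟨x, hx⟩ : ∃ x, 0 < r x ^ 2 - 16 * bad x - r x * (N / (4 * K)) := by
    have energy_ge : N ^ 3 / K ≤ E[E] := (div_le_iff₀' hK).2 hEK
    have hpos : 0 < N ^ 3 / K := by positivity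
    have : 16 * (N / (32 * K) * N ^ 2) = N ^ 3 / K / 2 := by field_simp; norm_num
    have : N ^ 2 * (N / (4 * K)) = N ^ 3 / K / 4 := by field_simp
    by_contra! hcon
    have := sum_nonpos (s := univ) fun x _ => hcon x
    rw [sum_sub_distrib, sum_sub_distrib, ← mul_sum, ← sum_mul, sum_r, sum_r_sq] at this
    linarith
  have hr_nonneg : 0 ≤ r x := Nat.cast_nonneg _
  have hbad_nonneg : 0 ≤ bad x := Nat.cast_nonneg _
  have : 0 < N / (4 * K) := by positivity
  exact ⟨x, by nlinarith, by nlinarith⟩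

theorem card_filter_few_related_ge {α : Type*} (F : Finset α) (R : α × α → Prop)
    [DecidablePred R] (hR : 16 * #{q ∈ F ×ˢ F | R q} ≤ #F ^ 2) :
    3 * #F ≤ 4 * #{a ∈ F | 4 * #{b ∈ F | R (a, b)} ≤ #F} := by
  set bad := {a ∈ F | ¬ 4 * #{b ∈ F | R (a, b)} ≤ #F}
  have markov : #bad * #F ≤ 4 * #{q ∈ F ×ˢ F | R q} := by
    calc #bad * #F ≤ ∑ a ∈ bad, 4 * #{b ∈ F | R (a, b)} :=
          card_nsmul_le_sum _ _ _ fun a ha => (not_le.1 (mem_filter.1 ha).2).le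
      _ ≤ ∑ a ∈ F, 4 * #{b ∈ F | R (a, b)} := sum_le_sum_of_subset (filter_subset _ _)
      _ = 4 * #{q ∈ F ×ˢ F | R q} := by
          simp_rw [← mul_sum, card_filter, sum_product]
  have split : #{a ∈ F | 4 * #{b ∈ F | R (a, b)} ≤ #F} + #bad = #F :=
    card_filter_add_card_filter_not _
  rcases (#F).eq_zero_or_pos with h0 | hpos
  · omega
  · have : 4 * #bad ≤ #F := by nlinarith
    omega

/-- The quadruples `((u₁, u₂), (v₁, v₂))` in `E` with `(u₁ - u₂) - (v₁ - v₂) = d`. -/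
def quadrupleReps (E : Finset G) (d : G) : Finset ((G × G) × (G × G)) :=
  {z ∈ (E ×ˢ E) ×ˢ (E ×ˢ E) | (z.1.1 - z.1.2) - (z.2.1 - z.2.2) = d}

theorem sum_card_quadrupleReps_le (E D : Finset G) :
    ∑ d ∈ D, #(quadrupleReps E d) ≤ #E ^ 4 := by
  unfold quadrupleReps
  rw [sum_card_fiberwise_eq_card_filter]
  refine (card_filter_le _ _).trans_eq ?_
  simp only [card_product]
  ring

theorem sum_card_shiftInter_mul_le_card_quadrupleReps (E S : Finset G) (a b : G) :
    ∑ c ∈ S, #(shiftInter E (a - c)) * #(shiftInter E (b - c)) ≤ #(quadrupleReps E (a - b)) := by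
  simp_rw [← card_product]
  rw [← card_sigma]
  refine card_le_card_of_injOn
    (fun w => ((w.2.1, w.2.1 - (a - w.1)), (w.2.2, w.2.2 - (b - w.1)))) ?_ ?_
  · rintro ⟨c, u, v⟩ hw
    simp only [coe_sigma, Set.mem_sigma_iff, mem_coe, mem_product, mem_shiftInter] at hw
    simp only [quadrupleReps, coe_filter, mem_product]
    exact ⟨⟨hw.2.1, hw.2.2⟩, by simp⟩
  · rintro ⟨c, u, v⟩ _ ⟨c', u', v'⟩ _ heq
    obtain ⟨⟨rfl, hc⟩, rfl, -⟩ := by simpa only [Prod.mk.injEq] using heq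
    obtain rfl : c = c' := by simpa using hc
    rfl

theorem card_quadrupleReps_ge {E F : Finset G} {τ : ℝ} (hτ : 0 ≤ τ) {a b : G}
    (ha : 4 * #{c ∈ F | (#(shiftInter E (a - c)) : ℝ) < τ} ≤ #F)
    (hb : 4 * #{c ∈ F | (#(shiftInter E (b - c)) : ℝ) < τ} ≤ #F) :
    #F / 2 * τ ^ 2 ≤ #(quadrupleReps E (a - b)) := by
  set badA := {c ∈ F | (#(shiftInter E (a - c)) : ℝ) < τ} with hbadA
  set badB := {c ∈ F | (#(shiftInter E (b - c)) : ℝ) < τ} with hbadB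
  have hgood : #F ≤ 2 * #(F \ (badA ∪ badB)) := by
    have := le_card_sdiff (badA ∪ badB) F
    have := card_union_le badA badB
    omega
  calc #F / 2 * τ ^ 2 ≤ #(F \ (badA ∪ badB)) • τ ^ 2 := by
        rw [nsmul_eq_mul]
        gcongr
        rw [div_le_iff₀' two_pos]
        exact_mod_cast hgood
    _ ≤ ∑ c ∈ F \ (badA ∪ badB), (#(shiftInter E (a - c)) * #(shiftInter E (b - c)) : ℝ) := by
        refine card_nsmul_le_sum _ _ _ fun c hc => ?_
        obtain ⟨hτa, hτb⟩ : τ ≤ #(shiftInter E (a - c)) ∧ τ ≤ #(shiftInter E (b - c)) := by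
          simp only [hbadA, hbadB, mem_sdiff, mem_union, mem_filter] at hc
          grind
        rw [sq]
        gcongr
    _ ≤ #(quadrupleReps E (a - b)) :=
        mod_cast sum_card_shiftInter_mul_le_card_quadrupleReps E _ a b

theorem balog_szemeredi_gowers [Finite G] {E : Finset G} {K : ℝ} (hK : 0 < K)
    (hE : E.Nonempty) (hEK : (#E : ℝ) ^ 3 ≤ K * E[E]) :
    ∃ H ⊆ E, (#E : ℝ) ≤ 8 * K * #H ∧ (#(H - H) : ℝ) ≤ 8192 * K ^ 3 * #E := by
  obtain ⟨x, hx, hbad⟩ := exists_shift_few_unpopularPairs hK hE hEK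
  set N : ℝ := (#E : ℝ)
  set F := shiftInter E x
  have hN : 0 < N := Nat.cast_pos.2 hE.card_pos
  set H := {a ∈ F | 4 * #{b ∈ F | (#(shiftInter E (a - b)) : ℝ) < N / (32 * K)} ≤ #F}
  have card_H : 3 * (#F : ℝ) ≤ 4 * #H := by
    exact_mod_cast card_filter_few_related_ge F
      (fun q => (#(shiftInter E (q.1 - q.2)) : ℝ) < N / (32 * K)) (mod_cast hbad)
  refine ⟨H, (filter_subset _ _).trans (shiftInter_subset _ _), ?_, ?_⟩
  · have hNK : N / (4 * K) * (4 * K) = N := by field_simp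
    nlinarith
  · have reps_ge : ∀ d ∈ H - H, #F / 2 * (N / (32 * K)) ^ 2 ≤ (#(quadrupleReps E d) : ℝ) := by
      intro d hd
      obtain ⟨a, ha, b, hb, rfl⟩ := mem_sub.1 hd
      exact card_quadrupleReps_ge (by positivity) (mem_filter.1 ha).2 (mem_filter.1 hb).2
    have reps_le : ∑ d ∈ H - H, (#(quadrupleReps E d) : ℝ) ≤ N ^ 4 := by
      simp only [N]
      exact_mod_cast sum_card_quadrupleReps_le E (H - H)
    have count : #(H - H) * (N / (4 * K) / 2 * (N / (32 * K)) ^ 2) ≤ N ^ 4 :=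
      calc #(H - H) * (N / (4 * K) / 2 * (N / (32 * K)) ^ 2)
          ≤ #(H - H) • (#F / 2 * (N / (32 * K)) ^ 2) := by rw [nsmul_eq_mul]; gcongr
        _ ≤ N ^ 4 := (card_nsmul_le_sum _ _ _ reps_ge).trans reps_le
    have expand : (#(H - H) : ℝ) * (N / (4 * K) / 2 * (N / (32 * K)) ^ 2) =
        #(H - H) * N ^ 3 / (8192 * K ^ 3) := by field_simp; ring
    rw [expand, div_le_iff₀ (by positivity)] at count
    refine le_of_mul_le_mul_right (count.trans_eq ?_) (pow_pos hN 3)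
    ring

end BalogSzemerediGowers

/-! ### Sets with many small dilations -/

theorem card_sub_comm {G : Type*} [AddCommGroup G] [DecidableEq G] (S T : Finset G) :
    #(S - T) = #(T - S) := by
  rw [← card_neg (S - T), neg_sub]

theorem card_sq_le_card_mul_card_collisions {α β : Type*} [DecidableEq β]
    {S : Finset α} {T : Finset β} {f : α → β} (hf : ∀ a ∈ S, f a ∈ T) :
    #S ^ 2 ≤ #T * #{z ∈ S ×ˢ S | f z.1 = f z.2} := by
  have fibre (b : β) : #{a ∈ S | f a = b} ^ 2 =
      #{z ∈ {z ∈ S ×ˢ S | f z.1 = f z.2} | f z.1 = b} := by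
    rw [sq, ← card_product, ← filter_product, filter_filter]
    refine congrArg _ (filter_congr fun z _ => ?_)
    grind
  calc #S ^ 2 = (∑ b ∈ T, #{a ∈ S | f a = b}) ^ 2 := by rw [← card_eq_sum_card_fiberwise hf]
    _ ≤ #T * ∑ b ∈ T, #{a ∈ S | f a = b} ^ 2 := sq_sum_le_card_mul_sum_sq
    _ = #T * #{z ∈ S ×ˢ S | f z.1 = f z.2} := by
        simp_rw [fibre]
        rw [← card_eq_sum_card_fiberwise fun z hz => hf _ (by grind)]

section SmallDilate

variable {F : Type*} [Field F] [DecidableEq F] {H : Finset F} {K L L₁ L₂ : ℝ} {ρ ρ₁ ρ₂ : F}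

/-- The scalar `ρ` is a *small dilation* of `H`, with constant `L`, if `H - ρ • H` has at most
`L * #H` elements. The scalars with this property are the almost-stabilizer of `H`; they are
closed under the field operations up to a polynomial loss in `L`. -/
def SmallDilate (H : Finset F) (L : ℝ) (ρ : F) : Prop :=
  (#(H - ρ • H) : ℝ) ≤ L * #H

theorem add_smul_finset_subset (ρ₁ ρ₂ : F) (S : Finset F) :
    (ρ₁ + ρ₂) • S ⊆ ρ₁ • S + ρ₂ • S := by
  intro z hz
  obtain ⟨x, hx, rfl⟩ := mem_smul_finset.1 hz
  rw [add_smul]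
  exact add_mem_add (smul_mem_smul_finset hx) (smul_mem_smul_finset hx)

theorem smul_finset_sub (ρ : F) (S T : Finset F) : ρ • (S - T) = ρ • S - ρ • T := by
  rw [sub_eq_add_neg, smul_add, smul_finset_neg, ← sub_eq_add_neg]

namespace SmallDilate

theorem mono (h : SmallDilate H L₁ ρ) (hL : L₁ ≤ L₂) : SmallDilate H L₂ ρ :=
  le_trans h (by gcongr)

theorem zero (hH : H.Nonempty) (hL : 1 ≤ L) : SmallDilate H L 0 := by
  rw [SmallDilate, zero_smul_finset hH, sub_zero]
  exact le_mul_of_one_le_left (Nat.cast_nonneg _) hL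

theorem one_iff : SmallDilate H L 1 ↔ (#(H - H) : ℝ) ≤ L * #H := by
  rw [SmallDilate, one_smul]

theorem inv (h : SmallDilate H L ρ) : SmallDilate H L ρ⁻¹ := by
  rcases eq_or_ne ρ 0 with rfl | hρ
  · rwa [inv_zero]
  have : #(H - ρ⁻¹ • H) = #(H - ρ • H) := by
    rw [← card_smul_finset₀ hρ (H - ρ⁻¹ • H), smul_finset_sub, smul_smul, mul_inv_cancel₀ hρ,
      one_smul, card_sub_comm]
  rwa [SmallDilate, this]

theorem mul (hH : H.Nonempty) (hL₁ : 1 ≤ L₁) (hL₂ : 1 ≤ L₂)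
    (h₁ : SmallDilate H L₁ ρ₁) (h₂ : SmallDilate H L₂ ρ₂) :
    SmallDilate H (L₁ * L₂) (ρ₁ * ρ₂) := by
  rcases eq_or_ne ρ₁ 0 with rfl | hρ
  · rw [zero_mul]
    exact zero hH (one_le_mul_of_one_le_of_one_le hL₁ hL₂)
  have triangle : #(H - (ρ₁ * ρ₂) • H) * #H ≤ #(H - ρ₁ • H) * #(H - ρ₂ • H) := by
    have := ruzsa_triangle_inequality_sub_sub_sub H (ρ₁ • H) ((ρ₁ * ρ₂) • H)
    rwa [card_smul_finset₀ hρ, ← smul_smul, ← smul_finset_sub, card_smul_finset₀ hρ,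
      card_sub_comm (ρ₂ • H), smul_smul] at this
  refine le_of_mul_le_mul_right ?_ (Nat.cast_pos.2 hH.card_pos)
  calc (#(H - (ρ₁ * ρ₂) • H) : ℝ) * #H ≤ #(H - ρ₁ • H) * #(H - ρ₂ • H) := mod_cast triangle
    _ ≤ (L₁ * #H) * (L₂ * #H) := by
        gcongr
        exacts [h₁, h₂]
    _ = L₁ * L₂ * #H * #H := by ring

theorem exists_cover (hH : H.Nonempty) (h : SmallDilate H L ρ) :
    ∃ X : Finset F, (#X : ℝ) ≤ L ∧ ρ • H ⊆ X + (H - H) := by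
  have hneg : (#(-(ρ • H) + H) : ℝ) ≤ L * #H := by rwa [neg_add_eq_sub]
  obtain ⟨X, -, hX, hcover⟩ := ruzsa_covering_add hH hneg
  refine ⟨-X, by simpa using hX, ?_⟩
  simpa [neg_add, add_comm] using neg_subset_neg hcover

theorem add_of_cover (hH : H.Nonempty) (hK : (#(H - H) : ℝ) ≤ K * #H)
    {X₁ X₂ : Finset F} (hX₁ : (#X₁ : ℝ) ≤ L₁) (hX₂ : (#X₂ : ℝ) ≤ L₂)
    (h₁ : ρ₁ • H ⊆ X₁ + (H - H)) (h₂ : ρ₂ • H ⊆ X₂ + (H - H)) :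
    SmallDilate H (L₁ * L₂ * K ^ 5) (ρ₁ + ρ₂) := by
  have hsub : H - (ρ₁ + ρ₂) • H ⊆ (-X₁ + -X₂) + (3 • H - 2 • H) := by
    calc H - (ρ₁ + ρ₂) • H ⊆ H - (ρ₁ • H + ρ₂ • H) :=
          sub_subset_sub_left (add_smul_finset_subset _ _ _)
      _ ⊆ H - ((X₁ + (H - H)) + (X₂ + (H - H))) := sub_subset_sub_left (add_subset_add h₁ h₂)
      _ = (-X₁ + -X₂) + (3 • H - 2 • H) := by
          simp only [succ_nsmul, zero_nsmul, zero_add, sub_eq_add_neg, neg_add, neg_neg]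
          ac_rfl
  have pluennecke : (#(3 • H - 2 • H) : ℝ) ≤ (#(H - H) / #H) ^ 5 * #H := by
    have := (NNRat.cast_le (K := ℝ)).2 (pluennecke_ruzsa_inequality_nsmul_sub_nsmul_sub hH H 3 2)
    push_cast at this
    simpa only using this
  have hcard : #(H - (ρ₁ + ρ₂) • H) ≤ #X₁ * #X₂ * #(3 • H - 2 • H) := by
    grw [hsub, card_add_le, card_add_le, card_neg, card_neg]
  have hL₁ : 0 ≤ L₁ := (Nat.cast_nonneg _).trans hX₁
  have hL₂ : 0 ≤ L₂ := (Nat.cast_nonneg _).trans hX₂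
  calc (#(H - (ρ₁ + ρ₂) • H) : ℝ) ≤ #X₁ * #X₂ * #(3 • H - 2 • H) := mod_cast hcard
    _ ≤ L₁ * L₂ * (K ^ 5 * #H) := by
        grw [hX₁, hX₂, pluennecke, div_le_of_le_mul₀ (by positivity) ?_ hK]
        exact nonneg_of_mul_nonneg_left ((Nat.cast_nonneg _).trans hK)
          (Nat.cast_pos.2 hH.card_pos)
    _ = L₁ * L₂ * K ^ 5 * #H := by ring

theorem add (hH : H.Nonempty) (hK : (#(H - H) : ℝ) ≤ L * #H)
    (h₁ : SmallDilate H L ρ₁) (h₂ : SmallDilate H L ρ₂) : SmallDilate H (L ^ 7) (ρ₁ + ρ₂) := by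
  obtain ⟨X₁, hX₁, hcover₁⟩ := h₁.exists_cover hH
  obtain ⟨X₂, hX₂, hcover₂⟩ := h₂.exists_cover hH
  exact (add_of_cover hH hK hX₁ hX₂ hcover₁ hcover₂).mono (by ring_nf; rfl)

theorem sub (hH : H.Nonempty) (hK : (#(H - H) : ℝ) ≤ L * #H)
    (h₁ : SmallDilate H L ρ₁) (h₂ : SmallDilate H L ρ₂) : SmallDilate H (L ^ 7) (ρ₁ - ρ₂) := by
  obtain ⟨X₁, hX₁, hcover₁⟩ := h₁.exists_cover hH
  obtain ⟨X₂, hX₂, hcover₂⟩ := h₂.exists_cover hH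
  have hcover_neg : -ρ₂ • H ⊆ -X₂ + (H - H) := by
    simpa [neg_smul_finset, neg_add, add_comm] using neg_subset_neg hcover₂
  rw [sub_eq_add_neg]
  exact (add_of_cover hH hK hX₁ (by simpa using hX₂) hcover₁ hcover_neg).mono (by ring_nf; rfl)

theorem sub_div_sub (hH : H.Nonempty) (hL : 1 ≤ L) (hK : (#(H - H) : ℝ) ≤ L * #H) {a b c d : F}
    (ha : SmallDilate H L a) (hb : SmallDilate H L b) (hc : SmallDilate H L c)
    (hd : SmallDilate H L d) : SmallDilate H (L ^ 14) ((a - b) / (c - d)) := by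
  have hL7 : 1 ≤ L ^ 7 := one_le_pow₀ hL
  rw [div_eq_mul_inv]
  exact (mul hH hL7 hL7 (sub hH hK ha hb) (sub hH hK hc hd).inv).mono (by ring_nf; rfl)

end SmallDilate

theorem card_dilates_collision_le [Fintype F] (z : (F × F) × (F × F)) :
    #{ρ : F | z.1.1 - ρ * z.1.2 = z.2.1 - ρ * z.2.2} ≤
      (if z.1 = z.2 then Fintype.card F else 0) + 1 := by
  split_ifs with hz
  · exact (card_le_univ _).trans (Nat.le_succ _)
  rw [zero_add, card_le_one]
  intro a ha b hb
  by_contra hab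
  rw [mem_filter_univ] at ha hb
  have hmul : (a - b) * (z.1.2 - z.2.2) = 0 := by linear_combination hb - ha
  have hsnd : z.1.2 = z.2.2 :=
    sub_eq_zero.1 ((mul_eq_zero.1 hmul).resolve_left (sub_ne_zero.2 hab))
  exact hz (Prod.ext (by simpa [hsnd] using ha) hsnd)

/-- The pairs of points of `H × H` with the same image under `(a, b) ↦ a - ρ * b`. -/
def dilateCollisions (H : Finset F) (ρ : F) : Finset ((F × F) × (F × F)) :=
  {z ∈ (H ×ˢ H) ×ˢ (H ×ˢ H) | z.1.1 - ρ * z.1.2 = z.2.1 - ρ * z.2.2}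

theorem sum_card_dilateCollisions_le [Fintype F] (H : Finset F) :
    ∑ ρ : F, #(dilateCollisions H ρ) ≤ Fintype.card F * #H ^ 2 + #H ^ 4 := by
  calc ∑ ρ : F, #(dilateCollisions H ρ)
      = ∑ z ∈ (H ×ˢ H) ×ˢ (H ×ˢ H), #{ρ : F | z.1.1 - ρ * z.1.2 = z.2.1 - ρ * z.2.2} :=
        sum_card_bipartiteAbove_eq_sum_card_bipartiteBelow _
    _ ≤ ∑ z ∈ (H ×ˢ H) ×ˢ (H ×ˢ H), ((if z.1 = z.2 then Fintype.card F else 0) + 1) :=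
        sum_le_sum fun z _ => card_dilates_collision_le z
    _ = Fintype.card F * #H ^ 2 + #H ^ 4 := by
        rw [sum_add_distrib, sum_product]
        simp only [sum_ite_eq, sum_const, card_product, smul_eq_mul, sum_ite_mem, inter_self]
        ring

theorem SmallDilate.card_pow_le_mul_card_dilateCollisions (hH : H.Nonempty)
    (h : SmallDilate H L ρ) : (#H : ℝ) ^ 3 ≤ L * #(dilateCollisions H ρ) := by
  have cauchy : #(H ×ˢ H) ^ 2 ≤ #(H - ρ • H) * #(dilateCollisions H ρ) :=
    card_sq_le_card_mul_card_collisions fun z hz =>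
      sub_mem_sub (mem_product.1 hz).1 (smul_mem_smul_finset (mem_product.1 hz).2)
  refine le_of_mul_le_mul_right ?_ (Nat.cast_pos.2 hH.card_pos)
  calc (#H : ℝ) ^ 3 * #H = ((#(H ×ˢ H) ^ 2 : ℕ) : ℝ) := by rw [card_product]; push_cast; ring
    _ ≤ #(H - ρ • H) * #(dilateCollisions H ρ) := mod_cast cauchy
    _ ≤ L * #H * #(dilateCollisions H ρ) := by
        gcongr
        exact h
    _ = L * #(dilateCollisions H ρ) * #H := by ring

theorem card_mul_card_le_of_forall_smallDilate [Fintype F] (hH : H.Nonempty)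
    (hall : ∀ ρ, SmallDilate H L ρ) :
    (#H : ℝ) * Fintype.card F ≤ L * (Fintype.card F + (#H : ℝ) ^ 2) := by
  have hpos : (0 : ℝ) < #H := Nat.cast_pos.2 hH.card_pos
  have hL : 0 ≤ L := nonneg_of_mul_nonneg_left ((Nat.cast_nonneg _).trans (hall 0)) hpos
  refine le_of_mul_le_mul_right ?_ (pow_pos hpos 2)
  calc (#H : ℝ) * Fintype.card F * #H ^ 2 = ∑ _ρ : F, (#H : ℝ) ^ 3 := by
        rw [sum_const, card_univ, nsmul_eq_mul]
        ring
    _ ≤ ∑ ρ : F, L * #(dilateCollisions H ρ) :=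
        sum_le_sum fun ρ _ => (hall ρ).card_pow_le_mul_card_dilateCollisions hH
    _ ≤ L * (Fintype.card F * #H ^ 2 + #H ^ 4) := by
        rw [← mul_sum]
        gcongr
        exact_mod_cast sum_card_dilateCollisions_le H
    _ = L * (Fintype.card F + #H ^ 2) * #H ^ 2 := by ring

end SmallDilate

section GlibichukKonyagin

variable {p : ℕ} [Fact p.Prime] {H P : Finset (ZMod p)} {L : ℝ}

/-- The quotients `(a - b) / (c - d)` of differences of elements of `P` with `c ≠ d`. -/
def quotientSet (P : Finset (ZMod p)) : Set (ZMod p) :=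
  {ξ | ∃ a ∈ P, ∃ b ∈ P, ∃ c ∈ P, ∃ d ∈ P, c ≠ d ∧ ξ = (a - b) / (c - d)}

theorem zero_mem_quotientSet (hP : 1 < #P) : 0 ∈ quotientSet P := by
  obtain ⟨x, hx, y, hy, hxy⟩ := one_lt_card.1 hP
  exact ⟨x, hx, x, hx, x, hx, y, hy, hxy, by simp⟩

theorem exists_mem_add_one_notMem {S : Set (ZMod p)} (h0 : 0 ∈ S) (hS : S ≠ Set.univ) :
    ∃ ξ ∈ S, ξ + 1 ∉ S := by
  by_contra! hsucc
  have hnat (n : ℕ) : (n : ZMod p) ∈ S := by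
    induction n with
    | zero => simpa using h0
    | succ k ih => simpa using hsucc _ ih
  refine hS (Set.eq_univ_of_forall fun ξ => ?_)
  simpa using hnat ξ.val

theorem card_image_add_mul_of_notMem_quotientSet {ξ : ZMod p} (hξ : ξ ∉ quotientSet P) :
    #((P ×ˢ P).image fun q => q.1 + ξ * q.2) = #P ^ 2 := by
  rw [card_image_of_injOn, card_product, sq]
  rintro ⟨a, b⟩ hab ⟨c, d⟩ hcd heq
  simp only [coe_product, Set.mem_prod, mem_coe] at hab hcd heq
  by_cases hdb : d = b
  · simpa [hdb] using heq
  · refine absurd ⟨a, hab.1, c, hcd.1, d, hcd.2, b, hab.2, hdb, ?_⟩ hξ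
    rw [eq_div_iff (sub_ne_zero.2 hdb)]
    linear_combination -heq

-- For `a, b ∈ P` the element `a + (ξ + 1) * b` costs an exponent `7 * 105 = 735`: `ξ` costs `14`,
-- adding two small dilations multiplies by `7`, and `14 * 7 + 1 ≤ 105`.
theorem forall_smallDilate_or_exists_card_sq (hH : H.Nonempty) (hL : 1 ≤ L)
    (hHL : (#(H - H) : ℝ) ≤ L * #H) (hP : 1 < #P) (hPL : ∀ x ∈ P, SmallDilate H L x) :
    (∀ ρ, SmallDilate H (L ^ 735) ρ) ∨
      ∃ P' : Finset (ZMod p), #P' = #P ^ 2 ∧ ∀ x ∈ P', SmallDilate H (L ^ 735) x := by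
  have doubling {k : ℕ} (hk : k ≠ 0) : (#(H - H) : ℝ) ≤ L ^ k * #H := by
    grw [hHL, ← le_self_pow₀ hL hk]
  have hquot : ∀ ξ ∈ quotientSet P, SmallDilate H (L ^ 14) ξ := by
    rintro _ ⟨a, ha, b, hb, c, hc, d, hd, -, rfl⟩
    exact .sub_div_sub hH hL hHL (hPL _ ha) (hPL _ hb) (hPL _ hc) (hPL _ hd)
  by_cases huniv : quotientSet P = Set.univ
  · refine .inl fun ρ => (hquot ρ (huniv ▸ Set.mem_univ ρ)).mono ?_
    exact pow_le_pow_right₀ hL (by norm_num)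
  obtain ⟨ξ, hξ, hξ1⟩ := exists_mem_add_one_notMem (zero_mem_quotientSet hP) huniv
  refine .inr ⟨_, card_image_add_mul_of_notMem_quotientSet hξ1, fun z hz => ?_⟩
  obtain ⟨⟨a, b⟩, hab, rfl⟩ := mem_image.1 hz
  obtain ⟨ha, hb⟩ := mem_product.1 hab
  have hξ_add_one : SmallDilate H ((L ^ 14) ^ 7) (ξ + 1) :=
    .add hH (doubling (by norm_num)) (hquot ξ hξ) (.one_iff.2 (doubling (by norm_num)))
  have hmul : SmallDilate H (L ^ 105) ((ξ + 1) * b) :=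
    (SmallDilate.mul hH (one_le_pow₀ (one_le_pow₀ hL)) hL hξ_add_one (hPL b hb)).mono (by
      rw [← pow_mul, ← pow_succ]
      exact pow_le_pow_right₀ hL (by norm_num))
  have ha' : SmallDilate H (L ^ 105) a := (hPL a ha).mono (le_self_pow₀ hL (by norm_num))
  exact (SmallDilate.add hH (doubling (by norm_num)) ha' hmul).mono (by rw [← pow_mul])

theorem forall_smallDilate_of_lt_card_pow (hH : H.Nonempty) (m : ℕ) (hL : 1 ≤ L)
    (hHL : (#(H - H) : ℝ) ≤ L * #H) (hP : 1 < #P) (hPL : ∀ x ∈ P, SmallDilate H L x)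
    (hpP : p < #P ^ 2 ^ m) (ρ : ZMod p) : SmallDilate H (L ^ 735 ^ m) ρ := by
  induction m generalizing L P with
  | zero =>
    have := card_le_univ P
    rw [ZMod.card] at this
    rw [pow_zero, pow_one] at hpP
    omega
  | succ m ih =>
    rcases forall_smallDilate_or_exists_card_sq hH hL hHL hP hPL with hall | ⟨P', hP', hP'L⟩
    · refine (hall ρ).mono (pow_le_pow_right₀ hL ?_)
      exact le_self_pow₀ (by norm_num) m.succ_ne_zero
    · rw [pow_succ', pow_mul]
      refine ih (one_le_pow₀ hL) ?_ ?_ hP'L ?_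
      · grw [hHL, ← le_self_pow₀ hL (show 735 ≠ 0 by norm_num)]
      · rw [hP']
        exact one_lt_pow₀ hP two_ne_zero
      · rwa [hP', ← pow_mul, ← pow_succ']

end GlibichukKonyagin

/-! ### Weights of large additive energy -/

section LevelSet

variable {α : Type*} [Fintype α] {W : α → ℝ} {s t : ℝ}

theorem sum_sq_indicator_lt_le (hW : 0 ≤ W) (hs : 0 ≤ s) :
    ∑ x, {x | W x < s}.indicator W x ^ 2 ≤ s * ∑ x, W x := by
  rw [mul_sum]
  refine sum_le_sum fun x _ => ?_
  rw [Set.indicator_apply]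
  split_ifs with hx
  · rw [sq]
    exact mul_le_mul_of_nonneg_right (le_of_lt hx) (hW x)
  · rw [zero_pow two_ne_zero]
    exact mul_nonneg hs (hW x)

theorem mul_sum_indicator_gt_le (hW : 0 ≤ W) :
    t * ∑ x, {x | t < W x}.indicator W x ≤ ∑ x, W x ^ 2 := by
  rw [mul_sum]
  refine sum_le_sum fun x _ => ?_
  rw [Set.indicator_apply]
  split_ifs with hx
  · rw [sq]
    exact mul_le_mul_of_nonneg_right (le_of_lt hx) (hW x)
  · rw [mul_zero]
    exact sq_nonneg _

/-- The points at which a weight takes a value between `s` and `t`. -/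
noncomputable def levelSet (W : α → ℝ) (s t : ℝ) : Finset α := {x | s ≤ W x ∧ W x ≤ t}

theorem mem_levelSet {x : α} : x ∈ levelSet W s t ↔ s ≤ W x ∧ W x ≤ t := mem_filter_univ _

theorem eq_indicator_add_indicator_add_indicator (hst : s ≤ t) :
    W = (levelSet W s t : Set α).indicator W + {x | W x < s}.indicator W +
      {x | t < W x}.indicator W := by
  ext x
  simp only [Set.indicator, Pi.add_apply, mem_coe, mem_levelSet, Set.mem_ofPred_eq]
  grind

end LevelSet

section Correlation

variable {G : Type*} [AddCommGroup G] [Fintype G] {f g W : G → ℝ} {K Q t : ℝ}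

/-- The correlation of two weights on a finite abelian group. -/
def corr (f g : G → ℝ) (x : G) : ℝ := ∑ a, f a * g (a - x)

/-- The squared `ℓ²` norm of the correlation, a weighted version of the additive energy. -/
def corrEnergy (f g : G → ℝ) : ℝ := ∑ x, corr f g x ^ 2

theorem corr_add_left (f₁ f₂ g : G → ℝ) : corr (f₁ + f₂) g = corr f₁ g + corr f₂ g := by
  ext x
  simp only [corr, Pi.add_apply, add_mul, sum_add_distrib]

theorem corr_add_right (f g₁ g₂ : G → ℝ) : corr f (g₁ + g₂) = corr f g₁ + corr f g₂ := by
  ext x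
  simp only [corr, Pi.add_apply, mul_add, sum_add_distrib]

theorem corrEnergy_le_sq_sum_mul_sum_sq (hf : 0 ≤ f) (g : G → ℝ) :
    corrEnergy f g ≤ (∑ x, f x) ^ 2 * ∑ x, g x ^ 2 := by
  have cauchy (x : G) : corr f g x ^ 2 ≤ (∑ a, f a) * ∑ a, f a * g (a - x) ^ 2 :=
    sum_sq_le_sum_mul_sum_of_sq_le_mul univ (fun a _ => hf a)
      (fun a _ => mul_nonneg (hf a) (sq_nonneg _)) fun a _ => le_of_eq (by ring)
  have translate (a : G) : ∑ x, g (a - x) ^ 2 = ∑ x, g x ^ 2 :=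
    Equiv.sum_comp (Equiv.subLeft a) fun x => g x ^ 2
  calc corrEnergy f g ≤ ∑ x, (∑ a, f a) * ∑ a, f a * g (a - x) ^ 2 :=
        sum_le_sum fun x _ => cauchy x
    _ = (∑ x, f x) ^ 2 * ∑ x, g x ^ 2 := by
        rw [← mul_sum, sum_comm]
        simp_rw [← mul_sum, translate]
        rw [← sum_mul]
        ring

theorem corrEnergy_le_sum_sq_mul_sq_sum (f : G → ℝ) (hg : 0 ≤ g) :
    corrEnergy f g ≤ (∑ x, f x ^ 2) * (∑ x, g x) ^ 2 := by
  have cauchy (x : G) : corr f g x ^ 2 ≤ (∑ a, g (a - x)) * ∑ a, f a ^ 2 * g (a - x) :=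
    sum_sq_le_sum_mul_sum_of_sq_le_mul univ (fun a _ => hg _)
      (fun a _ => mul_nonneg (sq_nonneg _) (hg _)) fun a _ => le_of_eq (by ring)
  have translate (a : G) : ∑ x, g (a - x) = ∑ x, g x := Equiv.sum_comp (Equiv.subLeft a) g
  calc corrEnergy f g ≤ ∑ x, (∑ a, g (a - x)) * ∑ a, f a ^ 2 * g (a - x) :=
        sum_le_sum fun x _ => cauchy x
    _ = (∑ a, g a) * ∑ a, ∑ x, f a ^ 2 * g (a - x) := by
        rw [sum_comm, mul_sum]
        exact sum_congr rfl fun x _ => congrArg (· * _) (Equiv.sum_comp (Equiv.subRight x) g)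
    _ = (∑ x, f x ^ 2) * (∑ x, g x) ^ 2 := by
        simp_rw [← mul_sum, translate]
        rw [← sum_mul]
        ring

theorem corrEnergy_add_add_self_le (m l h : G → ℝ) :
    corrEnergy (m + l + h) (m + l + h) ≤
      5 * (corrEnergy m m + corrEnergy m l + corrEnergy m h +
        corrEnergy l (m + l + h) + corrEnergy h (m + l + h)) := by
  have five_squares (a b c d e : ℝ) :
      (a + b + c + d + e) ^ 2 ≤ 5 * (a ^ 2 + b ^ 2 + c ^ 2 + d ^ 2 + e ^ 2) := by
    simpa [Fin.sum_univ_five] using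
      sq_sum_le_card_mul_sum_sq (s := univ) (f := ![a, b, c, d, e])
  simp only [corrEnergy, ← sum_add_distrib, mul_sum]
  refine sum_le_sum fun x _ => ?_
  refine le_trans (le_of_eq ?_) (five_squares _ _ _ _ _)
  rw [corr_add_left, corr_add_left, corr_add_right, corr_add_right]
  rfl

theorem corrEnergy_indicator_le [DecidableEq G] (E : Finset G) (hW : 0 ≤ W)
    (hWt : ∀ x ∈ E, W x ≤ t) :
    corrEnergy ((E : Set G).indicator W) ((E : Set G).indicator W) ≤ t ^ 4 * E[E] := by
  have bound (x : G) : corr ((E : Set G).indicator W) ((E : Set G).indicator W) x ≤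
      t ^ 2 * #(shiftInter E x) := by
    calc corr ((E : Set G).indicator W) ((E : Set G).indicator W) x
        = ∑ a ∈ shiftInter E x, W a * W (a - x) := by
          refine (sum_subset_zero_on_sdiff (subset_univ _) ?_ ?_).symm
          · intro a ha
            simp only [mem_sdiff, mem_univ, mem_shiftInter, true_and] at ha
            simp only [Set.indicator_apply, mem_coe]
            grind
          · intro a ha
            obtain ⟨haE, hbE⟩ := mem_shiftInter.1 ha
            rw [Set.indicator_of_mem haE, Set.indicator_of_mem hbE]
      _ ≤ #(shiftInter E x) • t ^ 2 := by
          refine sum_le_card_nsmul _ _ _ fun a ha => ?_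
          obtain ⟨haE, hbE⟩ := mem_shiftInter.1 ha
          rw [sq]
          exact mul_le_mul (hWt _ haE) (hWt _ hbE) (hW _) ((hW _).trans (hWt _ haE))
      _ = t ^ 2 * #(shiftInter E x) := by rw [nsmul_eq_mul, mul_comm]
  have hnonneg := Set.indicator_nonneg (s := (E : Set G)) fun x _ => hW x
  calc corrEnergy ((E : Set G).indicator W) ((E : Set G).indicator W)
      ≤ ∑ x, (t ^ 2 * #(shiftInter E x)) ^ 2 :=
        sum_le_sum fun x _ => pow_le_pow_left₀
          (sum_nonneg fun a _ => mul_nonneg (hnonneg _) (hnonneg _)) (bound x) 2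
    _ = t ^ 4 * E[E] := by
        rw [← sum_card_shiftInter_sq, Nat.cast_sum, mul_sum]
        push_cast
        exact sum_congr rfl fun x _ => by ring

/- Split `W` into its parts below `Q / M`, above `M * Q` and in between. By Young's inequality
all correlations other than that of the middle part with itself have energy at most `Q / M`. -/
theorem corrEnergy_self_le_addEnergy_levelSet [DecidableEq G] (hW : W ∈ stdSimplex ℝ G)
    (hQ : 0 < Q) (hWQ : ∑ x, W x ^ 2 ≤ Q) {M : ℝ} (hM : 1 ≤ M) :
    corrEnergy W W ≤ 5 * ((M * Q) ^ 4 * E[levelSet W (Q / M) (M * Q)] + 4 * (Q / M)) := by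
  have hM0 : 0 < M := by linarith
  have hst : Q / M ≤ M * Q := (div_le_self hQ.le hM).trans (le_mul_of_one_le_left hQ.le hM)
  set E := levelSet W (Q / M) (M * Q)
  set m := (E : Set G).indicator W
  set l := {x | W x < Q / M}.indicator W
  set h := {x | M * Q < W x}.indicator W
  have part_nonneg (S : Set G) : 0 ≤ S.indicator W := Set.indicator_nonneg fun x _ => hW.1 x
  have part_le (S : Set G) : S.indicator W ≤ W := Set.indicator_le_self' fun x _ => hW.1 x
  have sum_m : (∑ x, m x) ^ 2 ≤ 1 :=
    pow_le_one₀ (sum_nonneg fun x _ => part_nonneg _ x)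
      (hW.2 ▸ sum_le_sum fun x _ => part_le _ x)
  have sum_m_sq : ∑ x, m x ^ 2 ≤ Q :=
    (sum_le_sum fun x _ => pow_le_pow_left₀ (part_nonneg _ x) (part_le _ x) 2).trans hWQ
  have sum_l_sq : ∑ x, l x ^ 2 ≤ Q / M := by
    simpa [hW.2] using sum_sq_indicator_lt_le (s := Q / M) hW.1 (by positivity)
  have sum_h : (∑ x, h x) ^ 2 ≤ 1 / M := by
    have sum_h_le : ∑ x, h x ≤ 1 / M := by
      rw [le_div_iff₀ hM0]
      nlinarith [(mul_sum_indicator_gt_le (t := M * Q) hW.1).trans hWQ]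
    refine (pow_le_pow_left₀ (sum_nonneg fun x _ => part_nonneg _ x) sum_h_le 2).trans ?_
    exact pow_le_of_le_one (by positivity) (div_le_one_of_le₀ hM hM0.le) two_ne_zero
  have energy_mm : corrEnergy m m ≤ (M * Q) ^ 4 * E[E] :=
    corrEnergy_indicator_le E hW.1 fun x hx => (mem_levelSet.1 hx).2
  have energy_ml : corrEnergy m l ≤ Q / M := by
    grw [corrEnergy_le_sq_sum_mul_sum_sq (part_nonneg _), sum_m, sum_l_sq, one_mul]
  have energy_mh : corrEnergy m h ≤ Q / M := by
    grw [corrEnergy_le_sum_sq_mul_sq_sum _ (part_nonneg _), sum_m_sq, sum_h, mul_one_div]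
  have energy_lW : corrEnergy l W ≤ Q / M := by
    grw [corrEnergy_le_sum_sq_mul_sq_sum _ hW.1, hW.2, sum_l_sq, one_pow, mul_one]
  have energy_hW : corrEnergy h W ≤ Q / M := by
    grw [corrEnergy_le_sq_sum_mul_sum_sq (part_nonneg _), sum_h, hWQ, one_div_mul_eq_div]
  have split := corrEnergy_add_add_self_le m l h
  rw [← eq_indicator_add_indicator_add_indicator hst] at split
  linarith

theorem one_le_mul_addEnergy_levelSet [DecidableEq G] (hW : W ∈ stdSimplex ℝ G) (hQ : 0 < Q)
    (hWQ : ∑ x, W x ^ 2 ≤ Q) (hK : 1 ≤ K) (hN : Q / K ≤ corrEnergy W W) :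
    1 ≤ 2 ^ 27 * K ^ 5 * Q ^ 3 * E[levelSet W (Q / (64 * K)) (64 * K * Q)] := by
  have split := corrEnergy_self_le_addEnergy_levelSet hW hQ hWQ (M := 64 * K) (by linarith)
  set energy : ℝ := (E[levelSet W (Q / (64 * K)) (64 * K * Q)] : ℝ)
  have hQK : Q / (64 * K) = Q / K / 64 := by field_simp
  have hpos : 0 < Q / K := by positivity
  have main : Q / (8 * K) ≤ (64 * K * Q) ^ 4 * energy := by
    have : Q / (8 * K) = Q / K / 8 := by field_simp
    linarith
  rw [div_le_iff₀ (by positivity)] at main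
  refine le_of_mul_le_mul_left ?_ hQ
  linarith

theorem levelSet_structure [DecidableEq G] (hW : W ∈ stdSimplex ℝ G) (hQ : 0 < Q)
    (hWQ : ∑ x, W x ^ 2 ≤ Q) (hK : 2 ^ 9 ≤ K) (hN : Q / K ≤ corrEnergy W W) {E : Finset G}
    (hE : E = levelSet W (Q / (64 * K)) (64 * K * Q)) :
    #E * Q ≤ 64 * K ∧ 1 ≤ K ^ 3 * (#E * Q) ∧ (#E : ℝ) ^ 3 ≤ K ^ 13 * E[E] := by
  have hK1 : 1 ≤ K := by linarith
  have energy_ge := one_le_mul_addEnergy_levelSet hW hQ hWQ hK1 hN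
  rw [← hE] at energy_ge
  have energy_le : (E[E] : ℝ) ≤ #E ^ 3 := mod_cast addEnergy_self_le_card_pow E
  have card_le : #E * Q ≤ 64 * K := by
    have : #E • (Q / (64 * K)) ≤ 1 := by
      rw [← hW.2]
      refine (card_nsmul_le_sum _ W _ fun x hx => ?_).trans (sum_le_univ_sum_of_nonneg hW.1)
      exact (mem_levelSet.1 (hE ▸ hx)).1
    rwa [nsmul_eq_mul, mul_div_assoc', div_le_one (by positivity)] at this
  refine ⟨card_le, ?_, ?_⟩
  · rw [← one_le_pow_iff_of_nonneg (by positivity) three_ne_zero]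
    calc 1 ≤ 2 ^ 27 * K ^ 5 * Q ^ 3 * (#E : ℝ) ^ 3 := by grw [energy_ge, energy_le]
      _ = (2 ^ 9) ^ 3 * K ^ 5 * (#E * Q) ^ 3 := by ring
      _ ≤ K ^ 4 * K ^ 5 * (#E * Q) ^ 3 := by
          gcongr
          exact (pow_le_pow_left₀ (by norm_num) hK 3).trans (pow_le_pow_right₀ hK1 (by norm_num))
      _ = (K ^ 3 * (#E * Q)) ^ 3 := by ring
  · refine le_of_mul_le_mul_right ?_ (pow_pos hQ 3)
    calc (#E : ℝ) ^ 3 * Q ^ 3 = (#E * Q) ^ 3 := by ring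
      _ ≤ (64 * K) ^ 3 * (2 ^ 27 * K ^ 5 * Q ^ 3 * E[E]) := by
          grw [card_le, ← energy_ge, mul_one]
      _ = (2 ^ 9) ^ 5 * K ^ 8 * E[E] * Q ^ 3 := by ring
      _ ≤ K ^ 5 * K ^ 8 * E[E] * Q ^ 3 := by grw [hK]
      _ = K ^ 13 * E[E] * Q ^ 3 := by ring

theorem exists_small_doubling_of_corrEnergy_ge (hW : W ∈ stdSimplex ℝ G) [DecidableEq G]
    (hQ : 0 < Q) (hWQ : ∑ x, W x ^ 2 ≤ Q) (hK : 2 ^ 9 ≤ K) (hN : Q / K ≤ corrEnergy W W) :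
    ∃ H : Finset G, H.Nonempty ∧ (#(H - H) : ℝ) ≤ K ^ 54 * #H ∧ 1 ≤ K ^ 19 * ∑ x ∈ H, W x ∧
      1 ≤ K ^ 17 * (#H * Q) ∧ #H * Q ≤ K ^ 2 := by
  obtain ⟨E, hE⟩ : ∃ E, E = levelSet W (Q / (64 * K)) (64 * K * Q) := ⟨_, rfl⟩
  obtain ⟨hEQ, hEQ', energy⟩ := levelSet_structure hW hQ hWQ hK hN hE
  have hK0 : 0 < K := by linarith
  have hEne : E.Nonempty := by
    rw [nonempty_iff_ne_empty]
    rintro rfl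
    norm_num at hEQ'
  obtain ⟨H, hHE, hH, hHH⟩ := balog_szemeredi_gowers (pow_pos hK0 13) hEne energy
  have hHne : H.Nonempty := by
    have : (0 : ℝ) < #E := Nat.cast_pos.2 hEne.card_pos
    have : (0 : ℝ) < 8 * K ^ 13 * #H := by linarith
    exact card_pos.1 (Nat.cast_pos.1 (pos_of_mul_pos_right this (by positivity)))
  have hHQ : 1 ≤ K ^ 17 * (#H * Q) := by
    calc 1 ≤ K ^ 3 * ((8 * K ^ 13 * #H) * Q) := by grw [hEQ', hH]
      _ = 8 * (K ^ 16 * (#H * Q)) := by ring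
      _ ≤ K * (K ^ 16 * (#H * Q)) := by
          gcongr
          linarith
      _ = K ^ 17 * (#H * Q) := by ring
  refine ⟨H, hHne, ?_, ?_, hHQ, ?_⟩
  · calc (#(H - H) : ℝ) ≤ 8192 * (K ^ 13) ^ 3 * (8 * K ^ 13 * #H) := by grw [hHH, hH]
      _ = 2 ^ 16 * (K ^ 52 * #H) := by ring
      _ ≤ (2 ^ 9) ^ 2 * (K ^ 52 * #H) := by
          gcongr
          norm_num
      _ ≤ K ^ 2 * (K ^ 52 * #H) := by grw [hK]
      _ = K ^ 54 * #H := by ring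
  · have weight_ge : #H • (Q / (64 * K)) ≤ ∑ x ∈ H, W x :=
      card_nsmul_le_sum _ _ _ fun x hx => (mem_levelSet.1 (hE ▸ hHE hx)).1
    rw [nsmul_eq_mul] at weight_ge
    calc 1 ≤ K ^ 17 * (#H * Q) := hHQ
      _ = 64 * (K ^ 18 * (#H * (Q / (64 * K)))) := by field_simp
      _ ≤ K * (K ^ 18 * ∑ x ∈ H, W x) := by
          gcongr
          linarith
      _ = K ^ 19 * ∑ x ∈ H, W x := by ring
  · calc (#H : ℝ) * Q ≤ #E * Q := by grw [hHE]
      _ ≤ 64 * K := hEQ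
      _ ≤ K ^ 2 := by nlinarith

end Correlation

/-! ### Flattening under multiplicative convolution -/

section WeightedAverage

variable {ι : Type*} [Fintype ι] {σ : ι → ℝ}

theorem exists_sum_mul_le_of_mem_stdSimplex [Nonempty ι] (hσ : σ ∈ stdSimplex ℝ ι) (f : ι → ℝ) :
    ∃ i, ∑ j, σ j * f j ≤ f i := by
  obtain ⟨i, hi⟩ := Finite.exists_max f
  refine ⟨i, ?_⟩
  calc ∑ j, σ j * f j ≤ ∑ j, σ j * f i :=
        sum_le_sum fun j _ => mul_le_mul_of_nonneg_left (hi j) (hσ.1 j)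
    _ = f i := by rw [← sum_mul, hσ.2, one_mul]

theorem sq_sum_mul_le_sum_mul_sq (hσ : σ ∈ stdSimplex ℝ ι) (f : ι → ℝ) :
    (∑ i, σ i * f i) ^ 2 ≤ ∑ i, σ i * f i ^ 2 :=
  Real.pow_arith_mean_le_arith_mean_pow_of_even univ σ f (fun i _ => hσ.1 i) hσ.2 even_two

theorem half_le_mul_card_filter_half_le {t : ι → ℝ} {s v : ℝ} (hσ : σ ∈ stdSimplex ℝ ι)
    (hσs : ∀ i, σ i ≤ s) (ht : ∀ i, t i ≤ 1) (hv : 0 ≤ v) (hvt : v ≤ ∑ i, σ i * t i) :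
    v / 2 ≤ s * #{i | v / 2 ≤ t i} := by
  have split (i : ι) : σ i * t i ≤ (if v / 2 ≤ t i then s else 0) + σ i * (v / 2) := by
    split_ifs with hi
    · nlinarith [mul_le_mul_of_nonneg_left (ht i) (hσ.1 i), mul_nonneg (hσ.1 i) hv, hσs i]
    · rw [zero_add]
      exact mul_le_mul_of_nonneg_left (le_of_not_ge hi) (hσ.1 i)
  have hsum := sum_le_sum fun i (_ : i ∈ univ) => split i
  rw [sum_add_distrib, ← sum_mul, hσ.2, one_mul, ← sum_filter, sum_const, nsmul_eq_mul] at hsum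
  linarith

theorem le_mul_card_of_le_sum {ν : ι → ℝ} {I : Finset ι} {h K Q : ℝ} (hK : 4 ≤ K)
    (hν : ∑ i, ν i ^ 2 ≤ Q) (hh : 0 ≤ h) (hhQ : h * Q ≤ K ^ 2)
    (hI : ((K ^ 19)⁻¹) ^ 2 / 2 ≤ ∑ i ∈ I, ν i) : h ≤ K ^ 79 * #I := by
  have : 0 < K := by linarith
  have mass : 1 ≤ 2 * K ^ 38 * ∑ i ∈ I, ν i := by
    calc (1 : ℝ) = 2 * K ^ 38 * (((K ^ 19)⁻¹) ^ 2 / 2) := by field_simp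
      _ ≤ _ := by gcongr
  have cauchy : (∑ i ∈ I, ν i) ^ 2 ≤ #I * Q := by
    refine sq_sum_le_card_mul_sum_sq.trans (mul_le_mul_of_nonneg_left ?_ (Nat.cast_nonneg _))
    exact (sum_le_univ_sum_of_nonneg fun i => sq_nonneg _).trans hν
  calc h ≤ h * (2 * K ^ 38 * ∑ i ∈ I, ν i) ^ 2 := le_mul_of_one_le_right hh (one_le_pow₀ mass)
    _ = 4 * K ^ 76 * h * (∑ i ∈ I, ν i) ^ 2 := by ring
    _ ≤ 4 * K ^ 76 * h * (#I * Q) := by gcongr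
    _ = 4 * K ^ 76 * #I * (h * Q) := by ring
    _ ≤ 4 * K ^ 76 * #I * K ^ 2 := by gcongr
    _ ≤ K * K ^ 76 * #I * K ^ 2 := by gcongr
    _ = K ^ 79 * #I := by ring

end WeightedAverage

section SMulConv

variable {Γ α : Type*} [Group Γ] [Fintype Γ] [MulAction Γ α] {σ μ : Γ → ℝ} {ν : α → ℝ}

/-- The convolution of a weight on a group with a weight on a set it acts on: for probability
weights, the law of `g • x` with `g` and `x` independent of laws `σ` and `ν`. -/
def smulConv (σ : Γ → ℝ) (ν : α → ℝ) (x : α) : ℝ := ∑ g, σ g * ν (g⁻¹ • x)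

theorem smulConv_le (hσ : σ ∈ stdSimplex ℝ Γ) {b : ℝ} (hν : ∀ x, ν x ≤ b) (x : α) :
    smulConv σ ν x ≤ b := by
  calc smulConv σ ν x ≤ ∑ g, σ g * b :=
        sum_le_sum fun g _ => mul_le_mul_of_nonneg_left (hν _) (hσ.1 g)
    _ = b := by rw [← sum_mul, hσ.2, one_mul]

theorem smulConv_smulConv (σ μ : Γ → ℝ) (ν : α → ℝ) :
    smulConv (smulConv σ μ) ν = smulConv σ (smulConv μ ν) := by
  ext x
  simp only [smulConv, sum_mul, mul_sum]
  rw [sum_comm]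
  refine sum_congr rfl fun g _ => ?_
  rw [← Equiv.sum_comp (Equiv.mulLeft g)]
  refine sum_congr rfl fun h _ => ?_
  simp only [Equiv.coe_mulLeft, smul_eq_mul, inv_mul_cancel_left, mul_inv_rev, mul_smul, mul_assoc]

variable [Fintype α]

theorem sum_smulConv_smul {E : Type*} [AddCommGroup E] [Module ℝ E] (σ : Γ → ℝ) (ν : α → ℝ)
    (f : α → E) : ∑ x, smulConv σ ν x • f x = ∑ g, σ g • ∑ x, ν x • f (g • x) := by
  simp only [smulConv, sum_smul, smul_sum]
  rw [sum_comm]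
  refine sum_congr rfl fun g _ => ?_
  rw [← Equiv.sum_comp (MulAction.toPerm g)]
  refine sum_congr rfl fun x _ => ?_
  rw [MulAction.toPerm_apply, inv_smul_smul, mul_smul]

theorem smulConv_mem_stdSimplex (hσ : σ ∈ stdSimplex ℝ Γ) (hν : ν ∈ stdSimplex ℝ α) :
    smulConv σ ν ∈ stdSimplex ℝ α := by
  refine ⟨fun x => sum_nonneg fun g _ => mul_nonneg (hσ.1 g) (hν.1 _), ?_⟩
  simpa [hσ.2, hν.2] using sum_smulConv_smul σ ν fun _ => (1 : ℝ)

theorem sum_smulConv_sq_le (hσ : σ ∈ stdSimplex ℝ Γ) (ν : α → ℝ) :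
    ∑ x, smulConv σ ν x ^ 2 ≤ ∑ x, ν x ^ 2 := by
  calc ∑ x, smulConv σ ν x ^ 2 ≤ ∑ x, smulConv σ (fun x => ν x ^ 2) x :=
        sum_le_sum fun x _ => sq_sum_mul_le_sum_mul_sq hσ _
    _ = ∑ x, ν x ^ 2 := by
        simpa [← sum_mul, hσ.2] using sum_smulConv_smul σ (fun x => ν x ^ 2) fun _ => (1 : ℝ)

theorem exists_sq_le_sum_mul_sum_smul_inter [DecidableEq α] (hσ : σ ∈ stdSimplex ℝ Γ)
    (hν : ν ∈ stdSimplex ℝ α) (H : Finset α) {w : ℝ} (hw : 0 ≤ w)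
    (hwH : w ≤ ∑ x ∈ H, smulConv σ ν x) :
    ∃ h : Γ, w ^ 2 ≤ ∑ g, σ g * ∑ x ∈ g⁻¹ • H ∩ h⁻¹ • H, ν x := by
  set χ : α → ℝ := fun x => if x ∈ H then 1 else 0 with hχ
  have mass : ∑ x ∈ H, smulConv σ ν x = ∑ x, ν x * ∑ g, σ g * χ (g • x) := by
    have pairing := sum_smulConv_smul σ ν χ
    simp only [hχ, smul_eq_mul, mul_ite, mul_one, mul_zero, sum_ite_mem, univ_inter] at pairing
    rw [pairing]
    simp only [hχ, mul_sum]
    rw [sum_comm]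
    exact sum_congr rfl fun x _ => sum_congr rfl fun g _ => by split_ifs <;> ring
  have inter (g h : Γ) : ∑ x ∈ g⁻¹ • H ∩ h⁻¹ • H, ν x = ∑ x, ν x * (χ (g • x) * χ (h • x)) := by
    rw [← sum_ite_mem_eq]
    refine sum_congr rfl fun x _ => ?_
    simp only [hχ, mem_inter, mem_inv_smul_finset_iff, ite_and]
    split_ifs <;> simp
  obtain ⟨h, hh⟩ := exists_sum_mul_le_of_mem_stdSimplex hσ
    fun h => ∑ g, σ g * ∑ x ∈ g⁻¹ • H ∩ h⁻¹ • H, ν x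
  refine ⟨h, ?_⟩
  calc w ^ 2 ≤ (∑ x, ν x * ∑ g, σ g * χ (g • x)) ^ 2 := by rw [← mass]; gcongr
    _ ≤ ∑ x, ν x * (∑ g, σ g * χ (g • x)) ^ 2 := sq_sum_mul_le_sum_mul_sq hν _
    _ = ∑ h, σ h * ∑ g, σ g * ∑ x ∈ g⁻¹ • H ∩ h⁻¹ • H, ν x := by
        simp only [inter, sq, mul_sum, sum_mul]
        rw [sum_comm]
        refine sum_congr rfl fun h _ => ?_
        rw [sum_comm]
        exact sum_congr rfl fun g _ => sum_congr rfl fun x _ => by ring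
    _ ≤ _ := hh

end SMulConv

section Flattening

variable {F : Type*} [Field F] [DecidableEq F] {H : Finset F} {A B : ℝ}

theorem smallDilate_of_card_le_card_inter {u v : Fˣ} (hH : H.Nonempty)
    (hA : (#(H - H) : ℝ) ≤ A * #H) (hB : (#H : ℝ) ≤ B * #(u⁻¹ • H ∩ v⁻¹ • H)) :
    SmallDilate H (A ^ 2 * B) ((u / v : Fˣ) : F) := by
  set ρ : F := ((u / v : Fˣ) : F) with hρ
  set J : Finset F := u • (u⁻¹ • H ∩ v⁻¹ • H) with hJ
  have card_J : #J = #(u⁻¹ • H ∩ v⁻¹ • H) := card_smul_finset _ _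
  rw [← card_J] at hB
  have J_eq : J = H ∩ ρ • H := by
    rw [hJ, smul_finset_inter, smul_inv_smul, smul_smul, ← div_eq_mul_inv]
    rfl
  have hHpos : (0 : ℝ) < #H := by exact_mod_cast hH.card_pos
  have hA0 : 0 ≤ A * #H := (Nat.cast_nonneg _).trans hA
  have hJpos : (0 : ℝ) < #J := by
    by_contra! hJ0
    have : (#J : ℝ) = 0 := le_antisymm hJ0 (Nat.cast_nonneg _)
    rw [this, mul_zero] at hB
    linarith
  have left_le : #(H - J) ≤ #(H - H) :=
    card_le_card (sub_subset_sub_left (J_eq ▸ inter_subset_left))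
  have right_le : #(ρ • H - J) ≤ #(H - H) := by
    refine (card_le_card (sub_subset_sub_left (J_eq ▸ inter_subset_right))).trans ?_
    rw [← smul_finset_sub]
    exact card_image_le
  have triangle : (#(H - ρ • H) : ℝ) * #J ≤ #(H - H) * #(H - H) := by
    exact_mod_cast (ruzsa_triangle_inequality_sub_sub_sub H J (ρ • H)).trans
      (Nat.mul_le_mul left_le right_le)
  refine le_of_mul_le_mul_right ?_ hJpos
  calc (#(H - ρ • H) : ℝ) * #J ≤ (A * #H) * (A * #H) := triangle.trans (by gcongr)
    _ = A ^ 2 * #H * #H := by ring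
    _ ≤ A ^ 2 * #H * (B * #J) := by gcongr
    _ = A ^ 2 * B * #H * #J := by ring

variable [Fintype F] {σ : Fˣ → ℝ} {ν : F → ℝ} {Q K s : ℝ}

theorem exists_many_smallDilate_of_corrEnergy_ge (hσ : σ ∈ stdSimplex ℝ Fˣ) (hσs : ∀ u, σ u ≤ s)
    (hν : ν ∈ stdSimplex ℝ F) (hQ : 0 < Q) (hνQ : ∑ x, ν x ^ 2 ≤ Q) (hK : 2 ^ 9 ≤ K)
    (hE : Q / K ≤ corrEnergy (smulConv σ ν) (smulConv σ ν)) :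
    ∃ H : Finset F, H.Nonempty ∧ (#(H - H) : ℝ) ≤ K ^ 54 * #H ∧
      1 ≤ K ^ 17 * (#H * Q) ∧ #H * Q ≤ K ^ 2 ∧
      ∃ P : Finset F, 1 ≤ s * K ^ 39 * #P ∧ ∀ ρ ∈ P, SmallDilate H (K ^ 187) ρ := by
  obtain ⟨H, hH, hHH, hHW, hQH, hHQ⟩ := exists_small_doubling_of_corrEnergy_ge
    (smulConv_mem_stdSimplex hσ hν) hQ ((sum_smulConv_sq_le hσ ν).trans hνQ) hK hE
  refine ⟨H, hH, hHH, hQH, hHQ, ?_⟩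
  have hK4 : 4 ≤ K := le_trans (by norm_num) hK
  have : 0 < K := by linarith
  have hs0 : 0 ≤ s := (hσ.1 1).trans (hσs 1)
  obtain ⟨v, hv⟩ := exists_sq_le_sum_mul_sum_smul_inter hσ hν H (by positivity)
    ((inv_le_iff_one_le_mul₀' (by positivity)).2 hHW)
  set P : Finset Fˣ := {u | ((K ^ 19)⁻¹) ^ 2 / 2 ≤ ∑ x ∈ u⁻¹ • H ∩ v⁻¹ • H, ν x}
  have card_P : ((K ^ 19)⁻¹) ^ 2 / 2 ≤ s * #P :=
    half_le_mul_card_filter_half_le hσ hσs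
      (fun u => (sum_le_univ_sum_of_nonneg hν.1).trans hν.2.le) (by positivity) hv
  refine ⟨P.image fun u => ((u / v : Fˣ) : F), ?_, ?_⟩
  · rw [card_image_of_injective P (f := fun u => ((u / v : Fˣ) : F))
      (Units.val_injective.comp div_left_injective)]
    calc (1 : ℝ) = ((K ^ 19)⁻¹) ^ 2 / 2 * (2 * K ^ 38) := by field_simp
      _ ≤ s * #P * (K * K ^ 38) := by gcongr; linarith
      _ = s * K ^ 39 * #P := by ring
  · intro ρ hρ
    obtain ⟨u, hu, rfl⟩ := mem_image.1 hρ
    have hHI := le_mul_card_of_le_sum hK4 hνQ (Nat.cast_nonneg _) hHQ (mem_filter.1 hu).2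
    have := smallDilate_of_card_le_card_inter hH hHH hHI
    rwa [← pow_mul, ← pow_add] at this

theorem le_two_mul_or_le_two_mul_mul {h x M : ℝ} (hh : 0 < h) (hx : 0 < x) (hM : 0 ≤ M)
    (hle : h * x ≤ M * (x + h ^ 2)) : h ≤ 2 * M ∨ x ≤ 2 * M * h := by
  rcases le_total (h ^ 2) x with hhx | hhx
  · left
    refine le_of_mul_le_mul_right ?_ hx
    nlinarith
  · right
    refine le_of_mul_le_mul_left ?_ hh
    nlinarith

/- The quotients of popular dilation factors almost preserve a set `H` of size about `Q⁻¹`, hence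
so do all dilations, and this forces `H` to be almost trivial or almost the whole field. -/
theorem one_le_or_le_of_corrEnergy_ge {p : ℕ} [Fact p.Prime] {σ : (ZMod p)ˣ → ℝ} {ν : ZMod p → ℝ}
    (hσ : σ ∈ stdSimplex ℝ (ZMod p)ˣ) (hσs : ∀ u, σ u ≤ s) (hν : ν ∈ stdSimplex ℝ (ZMod p))
    (hQ : 0 < Q) (hνQ : ∑ x, ν x ^ 2 ≤ Q) (hK : 2 ^ 9 ≤ K) {m : ℕ}
    (hs : (s * K ^ 39) ^ 2 ^ m * p < 1)
    (hE : Q / K ≤ corrEnergy (smulConv σ ν) (smulConv σ ν)) :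
    1 ≤ K ^ (187 * 735 ^ m + 18) * Q ∨ p * Q ≤ K ^ (187 * 735 ^ m + 3) := by
  obtain ⟨H, hH, hHH, hQH, hHQ, P, hP, hPH⟩ :=
    exists_many_smallDilate_of_corrEnergy_ge hσ hσs hν hQ hνQ hK hE
  have hK2 : 2 ≤ K := le_trans (by norm_num) hK
  have hs0 : 0 ≤ s := (hσ.1 1).trans (hσs 1)
  have hp : (1 : ℝ) ≤ p := by exact_mod_cast (Fact.out : p.Prime).one_le
  have hpP : (p : ℝ) < (#P : ℝ) ^ 2 ^ m := by
    have hP' : 1 ≤ (s * K ^ 39) ^ 2 ^ m * (#P : ℝ) ^ 2 ^ m := by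
      rw [← mul_pow]
      exact one_le_pow₀ hP
    exact lt_of_mul_lt_mul_left (hs.trans_le hP') (by positivity)
  have hP1 : 1 < #P := by
    by_contra! hP1
    have := pow_le_one₀ (n := 2 ^ m) (Nat.cast_nonneg (α := ℝ) #P) (by exact_mod_cast hP1)
    linarith
  have all_small := forall_smallDilate_of_lt_card_pow hH m (one_le_pow₀ (by linarith))
    (hHH.trans (by gcongr <;> linarith)) hP1 hPH (by exact_mod_cast hpP)
  have size := card_mul_card_le_of_forall_smallDilate hH all_small
  rw [ZMod.card, ← pow_mul] at size
  set D := 187 * 735 ^ m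
  rcases le_two_mul_or_le_two_mul_mul (by exact_mod_cast hH.card_pos) (by linarith)
    (by positivity) size with small | large
  · left
    calc 1 ≤ K ^ 17 * (#H * Q) := hQH
      _ ≤ K ^ 17 * (K * K ^ D * Q) := by grw [small, hK2]
      _ = K ^ (D + 18) * Q := by ring
  · right
    calc p * Q ≤ 2 * K ^ D * #H * Q := by gcongr
      _ = 2 * K ^ D * (#H * Q) := by ring
      _ ≤ K * K ^ D * K ^ 2 := by gcongr
      _ = K ^ (D + 3) := by ring

theorem exists_forall_le_natCast_rpow {c : ℝ} (hc : 0 < c) (M : ℝ) :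
    ∃ N : ℕ, ∀ n ≥ N, M ≤ (n : ℝ) ^ c :=
  Filter.eventually_atTop.1
    (((tendsto_rpow_atTop hc).comp tendsto_natCast_atTop_atTop).eventually_ge_atTop M)

theorem exists_corrEnergy_smulConv_le {ε : ℝ} (hε : 0 < ε) :
    ∃ c : ℝ, 0 < c ∧ ∃ p₀ : ℕ, ∀ (p : ℕ) [Fact p.Prime], p₀ ≤ p →
      ∀ σ ∈ stdSimplex ℝ (ZMod p)ˣ, (∀ u, σ u ≤ (p : ℝ) ^ (-ε)) → ∀ ν ∈ stdSimplex ℝ (ZMod p),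
      ∀ Q : ℝ, ∑ x, ν x ^ 2 ≤ Q → (p : ℝ) ^ (-(3 / 4) : ℝ) < Q → Q ≤ (p : ℝ) ^ (-ε) →
        corrEnergy (smulConv σ ν) (smulConv σ ν) ≤ (p : ℝ) ^ (-c) * Q := by
  obtain ⟨m, hm⟩ : ∃ m : ℕ, 4 / ε < 2 ^ m := pow_unbounded_of_one_lt _ one_lt_two
  set D : ℕ := 187 * 735 ^ m
  have hD : (0 : ℝ) ≤ D := Nat.cast_nonneg D
  obtain ⟨c, hc, hcε, hc4⟩ : ∃ c : ℝ, 0 < c ∧ c * (D + 100) ≤ ε ∧ c * (D + 100) ≤ 1 / 4 := by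
    refine ⟨min ε (1 / 4) / (D + 100), by positivity, ?_, ?_⟩ <;>
      rw [div_mul_cancel₀ _ (by positivity)]
    exacts [min_le_left _ _, min_le_right _ _]
  obtain ⟨p₀, hp₀⟩ := exists_forall_le_natCast_rpow hc (2 ^ 9)
  refine ⟨c, hc, p₀, fun p _ hpp σ hσ hσs ν hν Q hνQ hQ hQε => ?_⟩
  have hp1 : (1 : ℝ) < p := by exact_mod_cast (Fact.out : p.Prime).one_lt
  have hp0 : (0 : ℝ) < p := by linarith
  have pow_eq (j : ℕ) : ((p : ℝ) ^ c) ^ j = (p : ℝ) ^ (c * j) := by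
    rw [Real.rpow_mul hp0.le, Real.rpow_natCast]
  have hs : ((p : ℝ) ^ (-ε) * ((p : ℝ) ^ c) ^ 39) ^ 2 ^ m * p < 1 := by
    rw [pow_eq, ← Real.rpow_add hp0, ← Real.rpow_mul_natCast hp0.le, ← Real.rpow_add_one hp0.ne']
    refine Real.rpow_lt_one_of_one_lt_of_neg hp1 ?_
    rw [div_lt_iff₀ hε] at hm
    have h39 : -ε + c * 39 ≤ -(ε / 2) := by nlinarith
    push_cast
    nlinarith [mul_le_mul_of_nonneg_right h39 (by positivity : (0 : ℝ) ≤ 2 ^ m)]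
  by_contra! hE
  rw [Real.rpow_neg hp0.le, ← div_eq_inv_mul] at hE
  rcases one_le_or_le_of_corrEnergy_ge hσ hσs hν (lt_trans (by positivity) hQ) hνQ (hp₀ p hpp) hs
    hE.le with small | large
  · have : (p : ℝ) ^ (c * (D + 18 : ℕ) + -ε) < 1 := by
      refine Real.rpow_lt_one_of_one_lt_of_neg hp1 ?_
      push_cast
      nlinarith
    rw [pow_eq] at small
    rw [Real.rpow_add hp0] at this
    exact this.not_ge (small.trans (by gcongr))
  · rw [pow_eq] at large
    have : (p : ℝ) ^ (1 + -(3 / 4) : ℝ) < (p : ℝ) ^ (c * (D + 3 : ℕ)) := by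
      rw [Real.rpow_add hp0, Real.rpow_one]
      exact lt_of_lt_of_le (by gcongr) large
    rw [Real.rpow_lt_rpow_left_iff hp1] at this
    push_cast at this
    nlinarith

end Flattening

/-! ### Convolution powers and Fourier transforms -/

section ConvPow

variable {Γ : Type*} [Group Γ] [Fintype Γ] [DecidableEq Γ] {α : Type*} [MulAction Γ α]
  {σ : Γ → ℝ}

theorem smulConv_single_one_left (ν : α → ℝ) : smulConv (Pi.single (1 : Γ) 1) ν = ν := by
  ext x
  simp [smulConv, Pi.single_apply]

theorem smulConv_single_one_right (σ : Γ → ℝ) : smulConv σ (Pi.single (1 : Γ) 1) = σ := by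
  ext x
  simp [smulConv, Pi.single_apply, inv_mul_eq_one]

/-- The `k`-fold convolution power of a weight on a group: for a probability weight, the law of the
product of `k` independent elements. -/
def convPow (σ : Γ → ℝ) (k : ℕ) : Γ → ℝ := (smulConv σ)^[k] (Pi.single 1 1)

theorem convPow_zero (σ : Γ → ℝ) : convPow σ 0 = Pi.single 1 1 := rfl

theorem convPow_succ (σ : Γ → ℝ) (k : ℕ) : convPow σ (k + 1) = smulConv σ (convPow σ k) :=
  Function.iterate_succ_apply' _ _ _

theorem convPow_one (σ : Γ → ℝ) : convPow σ 1 = σ := smulConv_single_one_right σ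

theorem convPow_add (σ : Γ → ℝ) (j k : ℕ) :
    convPow σ (j + k) = smulConv (convPow σ j) (convPow σ k) := by
  induction j with
  | zero => rw [zero_add, convPow_zero, smulConv_single_one_left]
  | succ j ih => rw [Nat.add_right_comm, convPow_succ, ih, convPow_succ, smulConv_smulConv]

theorem convPow_mem_stdSimplex (hσ : σ ∈ stdSimplex ℝ Γ) (k : ℕ) :
    convPow σ k ∈ stdSimplex ℝ Γ := by
  induction k with
  | zero => exact single_mem_stdSimplex ℝ 1
  | succ k ih => exact convPow_succ σ k ▸ smulConv_mem_stdSimplex hσ ih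

end ConvPow

theorem norm_sum_smul_pow_le {ι E : Type*} [Fintype ι] [SeminormedAddCommGroup E]
    [NormedSpace ℝ E] {σ : ι → ℝ} (hσ : σ ∈ stdSimplex ℝ ι) (f : ι → E) (n : ℕ) :
    ‖∑ i, σ i • f i‖ ^ n ≤ ∑ i, σ i * ‖f i‖ ^ n := by
  have triangle : ‖∑ i, σ i • f i‖ ≤ ∑ i, σ i * ‖f i‖ :=
    norm_sum_le_of_le _ fun i _ => (norm_smul_of_nonneg (hσ.1 i) _).le
  exact (pow_le_pow_left₀ (norm_nonneg _) triangle n).trans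
    (Real.pow_arith_mean_le_arith_mean_pow univ σ _ (fun i _ => hσ.1 i) hσ.2
      (fun i _ => norm_nonneg _) n)

section Correlation

variable {G : Type*} [AddCommGroup G] [Fintype G] {f g : G → ℝ}

theorem sum_corr (f g : G → ℝ) : ∑ x, corr f g x = (∑ a, f a) * ∑ a, g a := by
  have shift (a : G) : ∑ x, g (a - x) = ∑ x, g x := Equiv.sum_comp (Equiv.subLeft a) g
  simp only [corr]
  rw [sum_comm]
  simp only [← mul_sum, shift, sum_mul]

theorem corr_nonneg (hf : 0 ≤ f) (hg : 0 ≤ g) : 0 ≤ corr f g :=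
  fun _ => sum_nonneg fun a _ => mul_nonneg (hf a) (hg _)

theorem corr_mem_stdSimplex (hf : f ∈ stdSimplex ℝ G) (hg : g ∈ stdSimplex ℝ G) :
    corr f g ∈ stdSimplex ℝ G :=
  ⟨corr_nonneg hf.1 hg.1, by rw [sum_corr, hf.2, hg.2, one_mul]⟩

end Correlation

section Fourier

open scoped ComplexConjugate

variable {F : Type*} [Field F] [Fintype F] {ψ : AddChar F ℂ} {f ν : F → ℝ}

/-- The Fourier transform of a real weight on a finite field, with respect to the character `ψ`. -/
noncomputable def fourierSum (ψ : AddChar F ℂ) (f : F → ℝ) (ξ : F) : ℂ := ∑ x, f x • ψ (x * ξ)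

theorem norm_fourierSum_le_one (hν : ν ∈ stdSimplex ℝ F) (ξ : F) : ‖fourierSum ψ ν ξ‖ ≤ 1 := by
  simpa [fourierSum, hν.2] using norm_sum_smul_pow_le hν (fun x => ψ (x * ξ)) 1

theorem fourierSum_corr (f g : F → ℝ) (ξ : F) :
    fourierSum ψ (corr f g) ξ = fourierSum ψ f ξ * conj (fourierSum ψ g ξ) := by
  simp only [fourierSum, corr, map_sum, sum_mul_sum, sum_smul]
  rw [sum_comm]
  refine sum_congr rfl fun a _ => ?_
  rw [← Equiv.sum_comp (Equiv.subLeft a)]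
  refine sum_congr rfl fun x _ => ?_
  rw [Equiv.subLeft_apply, sub_sub_cancel, sub_mul, sub_eq_add_neg, AddChar.map_add_eq_mul,
    AddChar.map_neg_eq_conj]
  simp only [Complex.real_smul, map_mul, Complex.conj_ofReal, Complex.ofReal_mul]
  ring

theorem fourierSum_corr_self (f : F → ℝ) (ξ : F) :
    fourierSum ψ (corr f f) ξ = ((‖fourierSum ψ f ξ‖ ^ 2 : ℝ) : ℂ) := by
  rw [fourierSum_corr, Complex.mul_conj, Complex.normSq_eq_norm_sq]

theorem sum_fourierSum (hψ : ψ.IsPrimitive) (f : F → ℝ) :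
    ∑ ξ, fourierSum ψ f ξ = Fintype.card F * f 0 := by
  classical
  have orthogonality (x : F) : ∑ ξ, ψ (x * ξ) = if x = 0 then (Fintype.card F : ℂ) else 0 := by
    simpa [mul_comm x] using AddChar.sum_mulShift x hψ
  simp only [fourierSum]
  rw [sum_comm]
  simp [← mul_sum, orthogonality, mul_comm]

theorem sum_norm_fourierSum_sq (hψ : ψ.IsPrimitive) (f : F → ℝ) :
    ∑ ξ, ‖fourierSum ψ f ξ‖ ^ 2 = Fintype.card F * ∑ x, f x ^ 2 := by
  have inversion := sum_fourierSum hψ (corr f f)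
  simp only [fourierSum_corr_self, corr, sub_zero, ← sq] at inversion
  exact_mod_cast inversion

theorem sum_norm_fourierSum_pow_four (hψ : ψ.IsPrimitive) (f : F → ℝ) :
    ∑ ξ, ‖fourierSum ψ f ξ‖ ^ 4 = Fintype.card F * corrEnergy f f := by
  rw [corrEnergy, ← sum_norm_fourierSum_sq hψ]
  refine sum_congr rfl fun ξ _ => ?_
  rw [fourierSum_corr_self, Complex.norm_real, Real.norm_of_nonneg (sq_nonneg _), ← pow_mul]

theorem exists_fourierSum_eq_norm_pow (ψ : AddChar F ℂ) (hν : ν ∈ stdSimplex ℝ F) (m : ℕ) :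
    ∃ μ ∈ stdSimplex ℝ F,
      ∀ ξ, fourierSum ψ μ ξ = ((‖fourierSum ψ ν ξ‖ ^ (2 * m) : ℝ) : ℂ) := by
  classical
  induction m with
  | zero =>
    refine ⟨Pi.single 0 1, single_mem_stdSimplex ℝ 0, fun ξ => ?_⟩
    simp [fourierSum, Pi.single_apply]
  | succ m ih =>
    obtain ⟨μ, hμ, hμν⟩ := ih
    refine ⟨corr μ (corr ν ν), corr_mem_stdSimplex hμ (corr_mem_stdSimplex hν hν), fun ξ => ?_⟩
    rw [fourierSum_corr, hμν, fourierSum_corr_self, Complex.conj_ofReal, ← Complex.ofReal_mul,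
      ← pow_add, mul_add_one]

variable [DecidableEq F] {σ μ : Fˣ → ℝ}

/-- The exponential sum over the nonzero elements of a finite field with weight `μ`. -/
noncomputable def unitSum (ψ : AddChar F ℂ) (μ : Fˣ → ℝ) (ξ : F) : ℂ := ∑ u, μ u • ψ (u * ξ)

theorem fourierSum_smulConv (σ : Fˣ → ℝ) (ν : F → ℝ) (ξ : F) :
    fourierSum ψ (smulConv σ ν) ξ = ∑ u, σ u • fourierSum ψ ν (u * ξ) := by
  simp only [fourierSum, sum_smulConv_smul, Units.smul_def, smul_eq_mul, mul_left_comm, mul_assoc]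

theorem unitSum_smulConv (σ μ : Fˣ → ℝ) (ξ : F) :
    unitSum ψ (smulConv σ μ) ξ = ∑ u, σ u • unitSum ψ μ (u * ξ) := by
  simp only [unitSum, sum_smulConv_smul, smul_eq_mul, Units.val_mul, mul_left_comm, mul_assoc]

theorem unitSum_eq_fourierSum (μ : Fˣ → ℝ) :
    unitSum ψ μ = fourierSum ψ (smulConv μ (Pi.single (1 : F) 1)) := by
  ext ξ
  rw [fourierSum_smulConv]
  simp [unitSum, fourierSum, Pi.single_apply]

theorem norm_unitSum_le_one (hμ : μ ∈ stdSimplex ℝ Fˣ) (ξ : F) : ‖unitSum ψ μ ξ‖ ≤ 1 :=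
  unitSum_eq_fourierSum (ψ := ψ) μ ▸
    norm_fourierSum_le_one (smulConv_mem_stdSimplex hμ (single_mem_stdSimplex ℝ 1)) ξ

theorem sum_norm_unitSum_sq (hψ : ψ.IsPrimitive) (μ : Fˣ → ℝ) :
    ∑ ξ, ‖unitSum ψ μ ξ‖ ^ 2 = Fintype.card F * ∑ u, μ u ^ 2 := by
  have density (u : Fˣ) : smulConv μ (Pi.single (1 : F) 1) (u • (1 : F)) = μ u := by
    have (v : Fˣ) : v⁻¹ • u • (1 : F) = 1 ↔ v = u := by
      rw [smul_smul, Units.smul_def, smul_eq_mul, mul_one, Units.val_eq_one, inv_mul_eq_one]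
    simp [smulConv, Pi.single_apply, this]
  have pairing := sum_smulConv_smul μ (Pi.single (1 : F) 1) (smulConv μ (Pi.single (1 : F) 1))
  simp only [smul_eq_mul, Pi.single_apply, ite_mul, one_mul, zero_mul, sum_ite_eq', mem_univ,
    if_true, density, ← sq] at pairing
  rw [unitSum_eq_fourierSum, sum_norm_fourierSum_sq hψ, pairing]

theorem norm_unitSum_smulConv_le (hσ : σ ∈ stdSimplex ℝ Fˣ) {b : ℝ}
    (hb : ∀ ζ ≠ 0, ‖unitSum ψ μ ζ‖ ≤ b) {ξ : F} (hξ : ξ ≠ 0) :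
    ‖unitSum ψ (smulConv σ μ) ξ‖ ≤ b := by
  rw [unitSum_smulConv]
  calc ‖∑ u, σ u • unitSum ψ μ (u * ξ)‖ ≤ ∑ u, σ u * b :=
        norm_sum_le_of_le _ fun u _ => by
          rw [norm_smul_of_nonneg (hσ.1 u)]
          exact mul_le_mul_of_nonneg_left (hb _ (mul_ne_zero u.ne_zero hξ)) (hσ.1 u)
    _ = b := by rw [← sum_mul, hσ.2, one_mul]

theorem norm_unitSum_convPow_le_of_le (hσ : σ ∈ stdSimplex ℝ Fˣ) {b : ℝ} {k l : ℕ} (hkl : k ≤ l)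
    (hb : ∀ ζ ≠ 0, ‖unitSum ψ (convPow σ k) ζ‖ ≤ b) :
    ∀ ζ ≠ 0, ‖unitSum ψ (convPow σ l) ζ‖ ≤ b := by
  induction l, hkl using Nat.le_induction with
  | base => exact hb
  | succ l _ ih =>
    rw [convPow_succ]
    exact fun ζ hζ => norm_unitSum_smulConv_le hσ ih hζ

end Fourier

/-! ### Exponential sums over multiplicative random walks -/

section Moment

variable {F : Type*} [Field F] [Fintype F] [DecidableEq F] {ψ : AddChar F ℂ} {σ μ : Fˣ → ℝ}
  {ν : F → ℝ} {m : ℕ}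

/-- The normalized `n`-th moment of the exponential sum with weight `μ`. -/
noncomputable def moment (ψ : AddChar F ℂ) (μ : Fˣ → ℝ) (n : ℕ) : ℝ :=
  (∑ ξ, ‖unitSum ψ μ ξ‖ ^ n) / Fintype.card F

theorem moment_nonneg (ψ : AddChar F ℂ) (μ : Fˣ → ℝ) (n : ℕ) : 0 ≤ moment ψ μ n := by
  unfold moment
  positivity

theorem exists_fourierSum_eq_norm_unitSum_pow (hψ : ψ.IsPrimitive) (hμ : μ ∈ stdSimplex ℝ Fˣ)
    (m : ℕ) : ∃ ν ∈ stdSimplex ℝ F,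
      (∀ ξ, fourierSum ψ ν ξ = ((‖unitSum ψ μ ξ‖ ^ (2 * m) : ℝ) : ℂ)) ∧
        ∑ x, ν x ^ 2 = moment ψ μ (4 * m) := by
  obtain ⟨ν, hν, hνμ⟩ := exists_fourierSum_eq_norm_pow ψ
    (smulConv_mem_stdSimplex hμ (single_mem_stdSimplex ℝ (1 : F))) m
  rw [← unitSum_eq_fourierSum] at hνμ
  refine ⟨ν, hν, hνμ, ?_⟩
  rw [moment, eq_div_iff (by positivity), mul_comm, ← sum_norm_fourierSum_sq hψ]
  refine sum_congr rfl fun ξ _ => ?_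
  rw [hνμ, Complex.norm_real, Real.norm_of_nonneg (by positivity), ← pow_mul]
  ring

theorem moment_smulConv_le_corrEnergy (hψ : ψ.IsPrimitive) (hσ : σ ∈ stdSimplex ℝ Fˣ)
    (hν : ∀ ξ, fourierSum ψ ν ξ = ((‖unitSum ψ μ ξ‖ ^ (2 * m) : ℝ) : ℂ)) :
    moment ψ (smulConv σ μ) (4 * (2 * m)) ≤ corrEnergy (smulConv σ ν) (smulConv σ ν) := by
  rw [moment, div_le_iff₀ (by positivity), mul_comm (corrEnergy _ _),
    ← sum_norm_fourierSum_pow_four hψ]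
  refine sum_le_sum fun ξ _ => ?_
  have transform : fourierSum ψ (smulConv σ ν) ξ =
      ((∑ u, σ u * ‖unitSum ψ μ (u * ξ)‖ ^ (2 * m) : ℝ) : ℂ) := by
    simp only [fourierSum_smulConv, hν, Complex.real_smul, Complex.ofReal_sum, Complex.ofReal_mul]
  rw [mul_comm 4, pow_mul, transform, Complex.norm_real, unitSum_smulConv]
  gcongr
  exact (norm_sum_smul_pow_le hσ _ _).trans (Real.le_norm_self _)

theorem moment_four_le (hψ : ψ.IsPrimitive) (hσ : σ ∈ stdSimplex ℝ Fˣ) {s : ℝ}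
    (hσs : ∀ u, σ u ≤ s) : moment ψ σ 4 ≤ s := by
  rw [moment, div_le_iff₀ (by positivity)]
  calc ∑ ξ, ‖unitSum ψ σ ξ‖ ^ 4 ≤ ∑ ξ, ‖unitSum ψ σ ξ‖ ^ 2 := sum_le_sum fun ξ _ =>
        pow_le_pow_of_le_one (norm_nonneg _) (norm_unitSum_le_one hσ ξ) (by norm_num)
    _ = Fintype.card F * ∑ u, σ u ^ 2 := sum_norm_unitSum_sq hψ σ
    _ ≤ Fintype.card F * ∑ u, s * σ u := by
        gcongr with u
        rw [sq]
        exact mul_le_mul_of_nonneg_right (hσs u) (hσ.1 u)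
    _ = s * Fintype.card F := by rw [← mul_sum, hσ.2, mul_one, mul_comm]

-- Hölder's inequality twice turns the bilinear form `∑ μ u * μ v * ψ (u * v * ξ)` into one whose
-- weights have small `ℓ²` norm.
theorem norm_unitSum_smulConv_self_pow_le (hψ : ψ.IsPrimitive) (hμ : μ ∈ stdSimplex ℝ Fˣ) (m : ℕ)
    {ξ : F} (hξ : ξ ≠ 0) :
    ‖unitSum ψ (smulConv μ μ) ξ‖ ^ (8 * m ^ 2) ≤ Fintype.card F * moment ψ μ (4 * m) ^ 2 := by
  obtain ⟨ν, hν, hνμ, hν2⟩ := exists_fourierSum_eq_norm_unitSum_pow hψ hμ m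
  have first : ‖unitSum ψ (smulConv μ μ) ξ‖ ^ (2 * m) ≤ ‖∑ y, ν y • unitSum ψ μ (y * ξ)‖ := by
    have swap : ∑ y, ν y • unitSum ψ μ (y * ξ) =
        ((∑ u, μ u * ‖unitSum ψ μ (u * ξ)‖ ^ (2 * m) : ℝ) : ℂ) := by
      simp only [Complex.ofReal_sum, Complex.ofReal_mul, ← Complex.real_smul, ← hνμ]
      simp only [unitSum, fourierSum, smul_sum]
      rw [sum_comm]
      refine sum_congr rfl fun u _ => sum_congr rfl fun y _ => ?_
      rw [smul_comm, mul_left_comm]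
    rw [swap, Complex.norm_real, unitSum_smulConv]
    exact (norm_sum_smul_pow_le hμ _ _).trans (Real.le_norm_self _)
  have second : ‖∑ y, ν y • unitSum ψ μ (y * ξ)‖ ^ (2 * m) ≤
      ∑ y, ν y * ‖unitSum ψ μ (y * ξ)‖ ^ (2 * m) := norm_sum_smul_pow_le hν _ _
  have moment_eq : ∑ y, (‖unitSum ψ μ (y * ξ)‖ ^ (2 * m)) ^ 2 =
      Fintype.card F * moment ψ μ (4 * m) := by
    rw [moment, mul_div_cancel₀ _ (by positivity),
      ← Equiv.sum_comp (Equiv.mulRight₀ ξ hξ) fun y => ‖unitSum ψ μ y‖ ^ (4 * m)]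
    refine sum_congr rfl fun y _ => ?_
    rw [← pow_mul, Equiv.mulRight₀_apply]
    ring
  calc ‖unitSum ψ (smulConv μ μ) ξ‖ ^ (8 * m ^ 2)
      = ((‖unitSum ψ (smulConv μ μ) ξ‖ ^ (2 * m)) ^ (2 * m)) ^ 2 := by ring
    _ ≤ (∑ y, ν y * ‖unitSum ψ μ (y * ξ)‖ ^ (2 * m)) ^ 2 := by grw [first, second]
    _ ≤ (∑ y, ν y ^ 2) * ∑ y, (‖unitSum ψ μ (y * ξ)‖ ^ (2 * m)) ^ 2 := sum_mul_sq_le_sq_mul_sq _ _ _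
    _ = Fintype.card F * moment ψ μ (4 * m) ^ 2 := by rw [hν2, moment_eq]; ring

end Moment

section ExponentialSum

theorem exists_moment_convPow_le {ε : ℝ} (hε : 0 < ε) :
    ∃ I p₀ : ℕ, ∀ (p : ℕ) [Fact p.Prime], p₀ ≤ p → ∀ σ ∈ stdSimplex ℝ (ZMod p)ˣ,
      (∀ u, σ u ≤ (p : ℝ) ^ (-ε)) → ∀ ψ : AddChar (ZMod p) ℂ, ψ.IsPrimitive →
        ∃ i ≤ I, moment ψ (convPow σ (i + 1)) (4 * 2 ^ i) ≤ (p : ℝ) ^ (-(3 / 4) : ℝ) := by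
  obtain ⟨c, hc, p₀, flattening⟩ := exists_corrEnergy_smulConv_le hε
  obtain ⟨I, hI⟩ := exists_nat_ge (3 / 4 / c)
  rw [div_le_iff₀ hc] at hI
  refine ⟨I, p₀, fun p _ hpp σ hσ hσs ψ hψ => ?_⟩
  have hp1 : (1 : ℝ) < p := by exact_mod_cast (Fact.out : p.Prime).one_lt
  have hp0 : (0 : ℝ) < p := by linarith
  by_contra! large
  have decay : ∀ i ≤ I, moment ψ (convPow σ (i + 1)) (4 * 2 ^ i) ≤ (p : ℝ) ^ (-(c * i) + -ε) := by
    intro i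
    induction i with
    | zero => simpa [convPow_one] using moment_four_le hψ hσ hσs
    | succ i ih =>
      intro hi
      have ih := ih (by omega)
      obtain ⟨ν, hν, hνμ, hν2⟩ := exists_fourierSum_eq_norm_unitSum_pow hψ
        (convPow_mem_stdSimplex hσ (i + 1)) (2 ^ i)
      have le_start : moment ψ (convPow σ (i + 1)) (4 * 2 ^ i) ≤ (p : ℝ) ^ (-ε) :=
        ih.trans (Real.rpow_le_rpow_of_exponent_le hp1.le (by nlinarith [i.cast_nonneg (α := ℝ)]))
      rw [convPow_succ, pow_succ']
      calc moment ψ (smulConv σ (convPow σ (i + 1))) (4 * (2 * 2 ^ i))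
          ≤ corrEnergy (smulConv σ ν) (smulConv σ ν) := moment_smulConv_le_corrEnergy hψ hσ hνμ
        _ ≤ (p : ℝ) ^ (-c) * moment ψ (convPow σ (i + 1)) (4 * 2 ^ i) :=
            flattening p hpp σ hσ hσs ν hν _ hν2.le (large i (by omega)) le_start
        _ ≤ (p : ℝ) ^ (-c) * (p : ℝ) ^ (-(c * i) + -ε) := by gcongr
        _ = (p : ℝ) ^ (-(c * (i + 1 : ℕ)) + -ε) := by
            rw [← Real.rpow_add hp0]
            push_cast
            ring_nf
  refine ((large I le_rfl).trans_le (decay I le_rfl)).not_ge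
    (Real.rpow_le_rpow_of_exponent_le hp1.le ?_)
  linarith

theorem exists_norm_unitSum_convPow_le {ε : ℝ} (hε : 0 < ε) :
    ∃ k : ℕ, ∃ γ : ℝ, 0 < γ ∧ ∃ p₀ : ℕ, ∀ (p : ℕ) [Fact p.Prime], p₀ ≤ p →
      ∀ σ ∈ stdSimplex ℝ (ZMod p)ˣ, (∀ u, σ u ≤ (p : ℝ) ^ (-ε)) →
        ∀ ψ : AddChar (ZMod p) ℂ, ψ.IsPrimitive →
          ∀ ξ ≠ 0, ‖unitSum ψ (convPow σ k) ξ‖ ≤ (p : ℝ) ^ (-γ) := by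
  obtain ⟨I, p₀, small_moment⟩ := exists_moment_convPow_le hε
  refine ⟨2 * (I + 1), 1 / (16 * 4 ^ I), by positivity, p₀, fun p _ hpp σ hσ hσs ψ hψ => ?_⟩
  obtain ⟨i, hi, hmoment⟩ := small_moment p hpp σ hσ hσs ψ hψ
  have hp0 : (0 : ℝ) < p := by exact_mod_cast (Fact.out : p.Prime).pos
  refine norm_unitSum_convPow_le_of_le hσ (k := (i + 1) + (i + 1)) (by omega) fun ξ hξ => ?_
  refine le_of_pow_le_pow_left₀ (n := 8 * 4 ^ I) (by positivity) (by positivity) ?_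
  calc ‖unitSum ψ (convPow σ ((i + 1) + (i + 1))) ξ‖ ^ (8 * 4 ^ I)
      ≤ ‖unitSum ψ (convPow σ ((i + 1) + (i + 1))) ξ‖ ^ (8 * (2 ^ i) ^ 2) := by
        refine pow_le_pow_of_le_one (norm_nonneg _)
          (norm_unitSum_le_one (convPow_mem_stdSimplex hσ _) ξ) ?_
        rw [pow_right_comm]
        exact Nat.mul_le_mul_left 8 (Nat.pow_le_pow_right (by norm_num) hi)
    _ ≤ p * moment ψ (convPow σ (i + 1)) (4 * 2 ^ i) ^ 2 := by
        rw [convPow_add]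
        simpa only [ZMod.card] using norm_unitSum_smulConv_self_pow_le hψ
          (convPow_mem_stdSimplex hσ (i + 1)) (2 ^ i) hξ
    _ ≤ (p : ℝ) ^ (1 : ℝ) * ((p : ℝ) ^ (-(3 / 4) : ℝ)) ^ 2 := by
        rw [Real.rpow_one]
        gcongr
        exact moment_nonneg _ _ _
    _ = ((p : ℝ) ^ (-(1 / (16 * 4 ^ I)) : ℝ)) ^ (8 * 4 ^ I) := by
        simp only [← Real.rpow_natCast, ← Real.rpow_mul hp0.le, ← Real.rpow_add hp0]
        congr 1
        push_cast
        field_simp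
        norm_num

end ExponentialSum

/-! ### Twisted averages along a group action -/

section AdjointIterates

open scoped InnerProductSpace

variable {𝕜 E : Type*} [RCLike 𝕜] [SeminormedAddCommGroup E] [InnerProductSpace 𝕜 E] {T U : E → E}

theorem inner_iterate_comp_left (hTU : ∀ x y, ⟪T x, y⟫_𝕜 = ⟪x, U y⟫_𝕜) (n : ℕ) (x y : E) :
    ⟪(U ∘ T)^[n] x, y⟫_𝕜 = ⟪x, (U ∘ T)^[n] y⟫_𝕜 := by
  have hUT (x y : E) : ⟪U x, y⟫_𝕜 = ⟪x, T y⟫_𝕜 := by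
    rw [← inner_conj_symm, ← hTU, inner_conj_symm]
  induction n generalizing x with
  | zero => rfl
  | succ n ih =>
    rw [Function.iterate_succ_apply, ih, Function.iterate_succ_apply']
    exact (hUT _ _).trans (hTU _ _)

theorem norm_sq_le_norm_mul_norm_comp (hTU : ∀ x y, ⟪T x, y⟫_𝕜 = ⟪x, U y⟫_𝕜) (x : E) :
    ‖T x‖ ^ 2 ≤ ‖x‖ * ‖(U ∘ T) x‖ := by
  calc ‖T x‖ ^ 2 = ‖⟪T x, T x⟫_𝕜‖ := by
        rw [inner_self_eq_norm_sq_to_K, norm_pow, RCLike.norm_ofReal, abs_norm]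
    _ = ‖⟪x, (U ∘ T) x⟫_𝕜‖ := by rw [hTU, Function.comp_apply]
    _ ≤ ‖x‖ * ‖(U ∘ T) x‖ := norm_inner_le_norm _ _

theorem norm_pow_two_pow_le (hTU : ∀ x y, ⟪T x, y⟫_𝕜 = ⟪x, U y⟫_𝕜) (x : E) (i : ℕ) :
    ‖T x‖ ^ 2 ^ (i + 1) ≤ ‖x‖ ^ (2 ^ (i + 1) - 1) * ‖(U ∘ T)^[2 ^ i] x‖ := by
  induction i with
  | zero => simpa using norm_sq_le_norm_mul_norm_comp hTU x
  | succ i ih =>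
    have doubling : ‖(U ∘ T)^[2 ^ i] x‖ ^ 2 ≤ ‖x‖ * ‖(U ∘ T)^[2 ^ (i + 1)] x‖ := by
      simpa [← Function.iterate_add_apply, ← two_mul, ← pow_succ'] using
        norm_sq_le_norm_mul_norm_comp (inner_iterate_comp_left hTU (2 ^ i)) x
    calc ‖T x‖ ^ 2 ^ (i + 1 + 1) = (‖T x‖ ^ 2 ^ (i + 1)) ^ 2 := by rw [← pow_mul, ← pow_succ]
      _ ≤ (‖x‖ ^ (2 ^ (i + 1) - 1) * ‖(U ∘ T)^[2 ^ i] x‖) ^ 2 := by gcongr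
      _ = (‖x‖ ^ (2 ^ (i + 1) - 1)) ^ 2 * ‖(U ∘ T)^[2 ^ i] x‖ ^ 2 := mul_pow _ _ _
      _ ≤ (‖x‖ ^ (2 ^ (i + 1) - 1)) ^ 2 * (‖x‖ * ‖(U ∘ T)^[2 ^ (i + 1)] x‖) := by gcongr
      _ = ‖x‖ ^ (2 ^ (i + 1 + 1) - 1) * ‖(U ∘ T)^[2 ^ (i + 1)] x‖ := by
          rw [← mul_assoc, ← pow_mul, ← pow_succ]
          congr 2
          have := Nat.one_le_two_pow (n := i + 1)
          omega

theorem norm_sq_le_of_norm_iterate_sq_le (hTU : ∀ x y, ⟪T x, y⟫_𝕜 = ⟪x, U y⟫_𝕜) {x : E} {b : ℝ}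
    (hb : 0 ≤ b) {i : ℕ} (hx : ‖(U ∘ T)^[2 ^ i] x‖ ^ 2 ≤ b ^ 2 ^ (i + 1) * ‖x‖ ^ 2) :
    ‖T x‖ ^ 2 ≤ b * ‖x‖ ^ 2 := by
  refine le_of_pow_le_pow_left₀ (n := 2 ^ (i + 1)) (by positivity) (by positivity) ?_
  calc (‖T x‖ ^ 2) ^ 2 ^ (i + 1) = (‖T x‖ ^ 2 ^ (i + 1)) ^ 2 := pow_right_comm _ _ _
    _ ≤ (‖x‖ ^ (2 ^ (i + 1) - 1) * ‖(U ∘ T)^[2 ^ i] x‖) ^ 2 := by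
        grw [norm_pow_two_pow_le hTU x i]
    _ = (‖x‖ ^ (2 ^ (i + 1) - 1)) ^ 2 * ‖(U ∘ T)^[2 ^ i] x‖ ^ 2 := mul_pow _ _ _
    _ ≤ (‖x‖ ^ (2 ^ (i + 1) - 1)) ^ 2 * (b ^ 2 ^ (i + 1) * ‖x‖ ^ 2) := by gcongr
    _ = b ^ 2 ^ (i + 1) * (‖x‖ ^ (2 ^ (i + 1) - 1) * ‖x‖) ^ 2 := by ring
    _ = (b * ‖x‖ ^ 2) ^ 2 ^ (i + 1) := by
        rw [← pow_succ, Nat.sub_add_cancel Nat.one_le_two_pow, mul_pow, pow_right_comm]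

end AdjointIterates

section InverseWeight

variable {Γ : Type*} [Fintype Γ] {σ : Γ → ℝ}

theorem comp_inv_mem_stdSimplex [Group Γ] (hσ : σ ∈ stdSimplex ℝ Γ) :
    σ ∘ Inv.inv ∈ stdSimplex ℝ Γ :=
  ⟨fun g => hσ.1 g⁻¹, (Equiv.sum_comp (Equiv.inv Γ) σ).trans hσ.2⟩

variable [CommGroup Γ]

theorem smulConv_comm (σ μ : Γ → ℝ) : smulConv σ μ = smulConv μ σ := by
  ext v
  simp only [smulConv, smul_eq_mul]
  rw [← Equiv.sum_comp (Equiv.divLeft v)]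
  refine sum_congr rfl fun g _ => ?_
  rw [Equiv.divLeft_apply, inv_div, div_mul_cancel, mul_comm, div_eq_inv_mul]

theorem smulConv_comp_inv (σ μ : Γ → ℝ) :
    smulConv (σ ∘ Inv.inv) (μ ∘ Inv.inv) = smulConv σ μ ∘ Inv.inv := by
  ext v
  simp only [smulConv, smul_eq_mul, Function.comp_apply]
  rw [← Equiv.sum_comp (Equiv.inv Γ)]
  refine sum_congr rfl fun g _ => ?_
  rw [Equiv.inv_apply, inv_inv, mul_inv]

/-- The law of `g * h⁻¹` for independent `g` and `h` of law `σ`. -/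
def ratioLaw (σ : Γ → ℝ) : Γ → ℝ := smulConv σ (σ ∘ Inv.inv)

theorem ratioLaw_mem_stdSimplex (hσ : σ ∈ stdSimplex ℝ Γ) : ratioLaw σ ∈ stdSimplex ℝ Γ :=
  smulConv_mem_stdSimplex hσ (comp_inv_mem_stdSimplex hσ)

theorem ratioLaw_comp_inv (σ : Γ → ℝ) : ratioLaw σ ∘ Inv.inv = ratioLaw σ := by
  rw [ratioLaw, ← smulConv_comp_inv, smulConv_comm, Function.comp_assoc, inv_comp_inv,
    Function.comp_id]

theorem convPow_comp_inv [DecidableEq Γ] (σ : Γ → ℝ) (k : ℕ) :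
    convPow (σ ∘ Inv.inv) k = convPow σ k ∘ Inv.inv := by
  induction k with
  | zero =>
    ext g
    simp [convPow_zero, Pi.single_apply]
  | succ k ih => rw [convPow_succ, ih, smulConv_comp_inv, convPow_succ]

end InverseWeight

section SqDominated

variable {Γ α : Type*} [Group Γ] [Fintype Γ] [MulAction Γ α]
  {T U : EuclideanSpace ℂ α → EuclideanSpace ℂ α} {σ μ : Γ → ℝ}

/-- The operator `T` is pointwise controlled, in mean square, by averaging over the weight `σ` on a
group acting on the base set. -/
def SqDominated (T : EuclideanSpace ℂ α → EuclideanSpace ℂ α) (σ : Γ → ℝ) : Prop :=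
  ∀ f x, ‖T f x‖ ^ 2 ≤ ∑ g, σ g * ‖f (g • x)‖ ^ 2

theorem sum_smulConv_mul (σ μ : Γ → ℝ) (φ : Γ → ℝ) :
    ∑ v, smulConv σ μ v * φ v = ∑ h, μ h * ∑ g, σ g * φ (g * h) := by
  have pairing := sum_smulConv_smul σ μ φ
  simp only [smul_eq_mul, mul_sum] at pairing ⊢
  rw [pairing, sum_comm]
  exact sum_congr rfl fun h _ => sum_congr rfl fun g _ => mul_left_comm _ _ _

theorem SqDominated.comp (hU : SqDominated U μ) (hT : SqDominated T σ) (hμ : 0 ≤ μ) :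
    SqDominated (U ∘ T) (smulConv σ μ) := by
  intro f x
  rw [sum_smulConv_mul]
  refine (hU (T f) x).trans (sum_le_sum fun h _ => mul_le_mul_of_nonneg_left ?_ (hμ h))
  simpa only [mul_smul] using hT f (h • x)

theorem SqDominated.iterate [DecidableEq Γ] (hT : SqDominated T σ) (hσ : σ ∈ stdSimplex ℝ Γ)
    (k : ℕ) : SqDominated T^[k] (convPow σ k) := by
  induction k with
  | zero => simp [SqDominated, convPow_zero, Pi.single_apply]
  | succ k ih => exact convPow_succ σ k ▸ ih.comp hT (convPow_mem_stdSimplex hσ k).1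

variable [Fintype α]

theorem sum_sum_mul_smul (σ : Γ → ℝ) (φ : α → ℝ) :
    ∑ x, ∑ g, σ g * φ (g • x) = (∑ g, σ g) * ∑ x, φ x := by
  rw [sum_comm, sum_mul]
  refine sum_congr rfl fun g _ => ?_
  rw [← mul_sum, ← Equiv.sum_comp (MulAction.toPerm g) φ]
  simp only [MulAction.toPerm_apply]

theorem SqDominated.norm_sq_le (hT : SqDominated T σ) (hσ : σ ∈ stdSimplex ℝ Γ)
    (f : EuclideanSpace ℂ α) : ‖T f‖ ^ 2 ≤ ‖f‖ ^ 2 := by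
  rw [EuclideanSpace.norm_sq_eq, EuclideanSpace.norm_sq_eq]
  refine (sum_le_sum fun x _ => hT f x).trans_eq ?_
  rw [sum_sum_mul_smul σ fun x => ‖f x‖ ^ 2, hσ.2, one_mul]

end SqDominated

section TwistedAverage

open scoped InnerProductSpace ComplexConjugate

variable {Γ α : Type*} [Group Γ] [Fintype Γ] [MulAction Γ α] {c : Γ → α → ℂ} {σ : Γ → ℝ}

/-- The average of the translates of `f` along a group action, with coefficients depending on the
base point. -/
noncomputable def twistedAvg (c : Γ → α → ℂ) (f : EuclideanSpace ℂ α) : EuclideanSpace ℂ α :=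
  WithLp.toLp 2 fun x => ∑ g, c g x * f (g • x)

/-- The coefficients of the adjoint of `twistedAvg c`. -/
def adjointCoeff (c : Γ → α → ℂ) (g : Γ) (x : α) : ℂ := conj (c g⁻¹ (g • x))

theorem inner_twistedAvg_left [Fintype α] (c : Γ → α → ℂ) (f h : EuclideanSpace ℂ α) :
    ⟪twistedAvg c f, h⟫_ℂ = ⟪f, twistedAvg (adjointCoeff c) h⟫_ℂ := by
  simp only [PiLp.inner_apply, RCLike.inner_apply, twistedAvg, adjointCoeff, map_sum, map_mul,
    mul_sum, sum_mul]
  rw [sum_comm, sum_comm (s := univ (α := α)), ← Equiv.sum_comp (Equiv.inv Γ)]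
  refine sum_congr rfl fun g _ => ?_
  rw [← Equiv.sum_comp (MulAction.toPerm g)]
  refine sum_congr rfl fun x _ => ?_
  simp only [Equiv.inv_apply, MulAction.toPerm_apply, inv_smul_smul]
  ring

theorem norm_sum_mul_sq_le {ι : Type*} [Fintype ι] {a : ι → ℂ} (ha : ∑ i, ‖a i‖ ≤ 1)
    (f : ι → ℂ) : ‖∑ i, a i * f i‖ ^ 2 ≤ ∑ i, ‖a i‖ * ‖f i‖ ^ 2 := by
  calc ‖∑ i, a i * f i‖ ^ 2 ≤ (∑ i, ‖a i‖ * ‖f i‖) ^ 2 := by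
        gcongr
        exact norm_sum_le_of_le _ fun i _ => (norm_mul _ _).le
    _ ≤ (∑ i, ‖a i‖) * ∑ i, ‖a i‖ * ‖f i‖ ^ 2 :=
        sum_sq_le_sum_mul_sum_of_sq_le_mul _ (fun i _ => norm_nonneg _)
          (fun i _ => by positivity) fun i _ => le_of_eq (by ring)
    _ ≤ ∑ i, ‖a i‖ * ‖f i‖ ^ 2 :=
        mul_le_of_le_one_left (sum_nonneg fun i _ => by positivity) ha

theorem norm_twistedAvg_apply_sq_le (hσ : σ ∈ stdSimplex ℝ Γ) (hc : ∀ g x, ‖c g x‖ ≤ σ g)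
    (f : EuclideanSpace ℂ α) (x : α) :
    ‖twistedAvg c f x‖ ^ 2 ≤ ∑ g, ‖c g x‖ * ‖f (g • x)‖ ^ 2 :=
  norm_sum_mul_sq_le ((sum_le_sum fun g _ => hc g x).trans hσ.2.le) _

theorem sqDominated_twistedAvg (hσ : σ ∈ stdSimplex ℝ Γ) (hc : ∀ g x, ‖c g x‖ ≤ σ g) :
    SqDominated (twistedAvg c) σ := fun f x =>
  (norm_twistedAvg_apply_sq_le hσ hc f x).trans
    (sum_le_sum fun g _ => mul_le_mul_of_nonneg_right (hc g x) (sq_nonneg _))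

theorem sqDominated_twistedAvg_adjointCoeff (hσ : σ ∈ stdSimplex ℝ Γ)
    (hc : ∀ g x, ‖c g x‖ ≤ σ g) : SqDominated (twistedAvg (adjointCoeff c)) (σ ∘ Inv.inv) :=
  sqDominated_twistedAvg (comp_inv_mem_stdSimplex hσ) fun g x =>
    (RCLike.norm_conj _).trans_le (hc g⁻¹ (g • x))

theorem norm_sq_twistedAvg_comp_le [Fintype α]
    {W : EuclideanSpace ℂ α → EuclideanSpace ℂ α} {μ : Γ → ℝ}
    (hσ : σ ∈ stdSimplex ℝ Γ) (hc : ∀ g x, ‖c g x‖ ≤ σ g) (hW : SqDominated W (μ ∘ Inv.inv))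
    {f : EuclideanSpace ℂ α} {b : ℝ}
    (hb : ∀ y, f y ≠ 0 → ∑ g, ∑ u, μ u * ‖c g (g⁻¹ • u • y)‖ ≤ b) :
    ‖twistedAvg c (W f)‖ ^ 2 ≤ b * ‖f‖ ^ 2 := by
  have change_variables (g u : Γ) : ∑ x, ‖c g x‖ * (μ u⁻¹ * ‖f (u • g • x)‖ ^ 2) =
      ∑ y, μ u⁻¹ * ‖c g (g⁻¹ • u⁻¹ • y)‖ * ‖f y‖ ^ 2 := by
    rw [← Equiv.sum_comp (MulAction.toPerm (u * g)) fun y => _ * ‖f y‖ ^ 2]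
    refine sum_congr rfl fun x _ => ?_
    simp only [MulAction.toPerm_apply, mul_smul, inv_smul_smul]
    ring
  rw [EuclideanSpace.norm_sq_eq, EuclideanSpace.norm_sq_eq]
  calc ∑ x, ‖twistedAvg c (W f) x‖ ^ 2
      ≤ ∑ x, ∑ g, ‖c g x‖ * ∑ u, μ u⁻¹ * ‖f (u • g • x)‖ ^ 2 := by
        refine sum_le_sum fun x _ => (norm_twistedAvg_apply_sq_le hσ hc _ x).trans ?_
        exact sum_le_sum fun g _ => mul_le_mul_of_nonneg_left (hW f (g • x)) (norm_nonneg _)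
    _ = ∑ g, ∑ u, ∑ x, ‖c g x‖ * (μ u⁻¹ * ‖f (u • g • x)‖ ^ 2) := by
        simp only [mul_sum]
        rw [sum_comm]
        exact sum_congr rfl fun g _ => sum_comm
    _ = ∑ g, ∑ u, ∑ y, μ u * ‖c g (g⁻¹ • u • y)‖ * ‖f y‖ ^ 2 := by
        refine sum_congr rfl fun g _ => ?_
        rw [← Equiv.sum_comp (Equiv.inv Γ)]
        refine sum_congr rfl fun u _ => ?_
        rw [change_variables, Equiv.inv_apply, inv_inv]
    _ = ∑ y, (∑ g, ∑ u, μ u * ‖c g (g⁻¹ • u • y)‖) * ‖f y‖ ^ 2 := by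
        simp only [sum_mul]
        rw [sum_comm (s := univ (α := α))]
        exact sum_congr rfl fun g _ => sum_comm
    _ ≤ ∑ y, b * ‖f y‖ ^ 2 := by
        refine sum_le_sum fun y _ => ?_
        by_cases hy : f y = 0
        · simp [hy]
        · exact mul_le_mul_of_nonneg_right (hb y hy) (sq_nonneg _)
    _ = b * ∑ y, ‖f y‖ ^ 2 := (mul_sum _ _ _).symm

end TwistedAverage

theorem norm_sq_twistedAvg_le {Γ α : Type*} [CommGroup Γ] [Fintype Γ] [DecidableEq Γ]
    [MulAction Γ α] [Fintype α] {c : Γ → α → ℂ} {σ : Γ → ℝ} (hσ : σ ∈ stdSimplex ℝ Γ)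
    (hc : ∀ g x, ‖c g x‖ ≤ σ g) {f : EuclideanSpace ℂ α} {b : ℝ} (hb : 0 ≤ b) (i : ℕ)
    (hf : ∀ y, f y ≠ 0 → ∑ g, ∑ u, convPow (ratioLaw σ) (2 ^ i - 1) u * ‖c g (g⁻¹ • u • y)‖ ≤
      b ^ 2 ^ (i + 1)) :
    ‖twistedAvg c f‖ ^ 2 ≤ b * ‖f‖ ^ 2 := by
  set T := twistedAvg c
  set U := twistedAvg (adjointCoeff c)
  have hU : SqDominated U (σ ∘ Inv.inv) := sqDominated_twistedAvg_adjointCoeff hσ hc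
  have hUT : SqDominated (U ∘ T) (ratioLaw σ) :=
    hU.comp (sqDominated_twistedAvg hσ hc) (comp_inv_mem_stdSimplex hσ).1
  have hiter := hUT.iterate (ratioLaw_mem_stdSimplex hσ) (2 ^ i - 1)
  rw [← ratioLaw_comp_inv, convPow_comp_inv] at hiter
  refine norm_sq_le_of_norm_iterate_sq_le (inner_twistedAvg_left c) hb (i := i) ?_
  rw [← Nat.sub_add_cancel (Nat.one_le_two_pow (n := i)), Function.iterate_succ_apply']
  exact (hU.norm_sq_le (comp_inv_mem_stdSimplex hσ) _).trans
    (norm_sq_twistedAvg_comp_le hσ hc hiter hf)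

/-! ### Averages over affine maps -/

section AverageOverDilates

variable {F : Type*} [Field F] [Fintype F] [DecidableEq F] {ψ : AddChar F ℂ} {μ : Fˣ → ℝ}
  {f : F → ℝ} {τ : ℝ}

theorem sum_smul_fourierSum_smul (f : F → ℝ) (μ : Fˣ → ℝ) (ζ : F) :
    ∑ u, μ u • fourierSum ψ f (u • ζ) = ∑ x, f x • unitSum ψ μ (x * ζ) := by
  simp only [fourierSum, unitSum, smul_sum]
  rw [sum_comm]
  refine sum_congr rfl fun x _ => sum_congr rfl fun u _ => ?_
  rw [smul_comm, Units.smul_def, smul_eq_mul, mul_left_comm]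

theorem sum_mul_norm_fourierSum_smul_sq_le (hμ : μ ∈ stdSimplex ℝ Fˣ)
    (hτ : ∀ ξ ≠ 0, ‖unitSum ψ μ ξ‖ ≤ τ) (hf : 0 ≤ f) {ζ : F} (hζ : ζ ≠ 0) :
    ∑ u, μ u * ‖fourierSum ψ f (u • ζ)‖ ^ 2 ≤ ∑ x, f x ^ 2 + τ * (∑ x, f x) ^ 2 := by
  have hcorr : 0 ≤ corr f f := corr_nonneg hf hf
  have hτ0 : 0 ≤ τ := (norm_nonneg _).trans (hτ ζ hζ)
  have termwise (x : F) : corr f f x * ‖unitSum ψ μ (x * ζ)‖ ≤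
      (if x = 0 then corr f f x else 0) + τ * corr f f x := by
    split_ifs with hx
    · exact (mul_le_of_le_one_right (hcorr x) (norm_unitSum_le_one hμ _)).trans
        (le_add_of_nonneg_right (mul_nonneg hτ0 (hcorr x)))
    · rw [zero_add, mul_comm]
      exact mul_le_mul_of_nonneg_right (hτ _ (mul_ne_zero hx hζ)) (hcorr x)
  have as_corr : ∑ u, μ u * ‖fourierSum ψ f (u • ζ)‖ ^ 2 =
      ‖∑ u, μ u • fourierSum ψ (corr f f) (u • ζ)‖ := by
    simp only [fourierSum_corr_self, Complex.real_smul, ← Complex.ofReal_mul,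
      ← Complex.ofReal_sum, Complex.norm_real]
    exact (Real.norm_of_nonneg (sum_nonneg fun u _ => mul_nonneg (hμ.1 u) (sq_nonneg _))).symm
  calc ∑ u, μ u * ‖fourierSum ψ f (u • ζ)‖ ^ 2
      = ‖∑ x, corr f f x • unitSum ψ μ (x * ζ)‖ := by rw [as_corr, sum_smul_fourierSum_smul]
    _ ≤ ∑ x, corr f f x * ‖unitSum ψ μ (x * ζ)‖ :=
        norm_sum_le_of_le _ fun x _ => (norm_smul_of_nonneg (hcorr x) _).le
    _ ≤ ∑ x, ((if x = 0 then corr f f x else 0) + τ * corr f f x) :=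
        sum_le_sum fun x _ => termwise x
    _ = ∑ x, f x ^ 2 + τ * (∑ x, f x) ^ 2 := by
        rw [sum_add_distrib, ← mul_sum, sum_corr, sum_ite_eq' univ 0, if_pos (mem_univ _), corr]
        simp only [sub_zero, sq]

theorem sum_mul_norm_fourierSum_smul_le (hμ : μ ∈ stdSimplex ℝ Fˣ)
    (hτ : ∀ ξ ≠ 0, ‖unitSum ψ μ ξ‖ ≤ τ) (hf : 0 ≤ f) {ζ : F} (hζ : ζ ≠ 0) :
    ∑ u, μ u * ‖fourierSum ψ f (u • ζ)‖ ≤ √(∑ x, f x ^ 2) + √τ * ∑ x, f x := by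
  have hτ0 : 0 ≤ τ := (norm_nonneg _).trans (hτ ζ hζ)
  have hsum : 0 ≤ ∑ x, f x := sum_nonneg fun x _ => hf x
  refine le_of_pow_le_pow_left₀ two_ne_zero (by positivity) ?_
  calc (∑ u, μ u * ‖fourierSum ψ f (u • ζ)‖) ^ 2
      ≤ ∑ u, μ u * ‖fourierSum ψ f (u • ζ)‖ ^ 2 := sq_sum_mul_le_sum_mul_sq hμ _
    _ ≤ ∑ x, f x ^ 2 + τ * (∑ x, f x) ^ 2 := sum_mul_norm_fourierSum_smul_sq_le hμ hτ hf hζ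
    _ = √(∑ x, f x ^ 2) ^ 2 + (√τ * ∑ x, f x) ^ 2 := by
        rw [mul_pow, Real.sq_sqrt hτ0, Real.sq_sqrt (sum_nonneg fun x _ => sq_nonneg _)]
    _ ≤ (√(∑ x, f x ^ 2) + √τ * ∑ x, f x) ^ 2 := by
        rw [add_sq']
        exact le_add_of_nonneg_right (by positivity)

end AverageOverDilates

section AffineAverage

variable {F : Type*} [Field F] [Fintype F] {ψ : AddChar F ℂ} {w : Fˣ × F → ℝ}

/-- The law of the slope of a random affine map `x ↦ s * x + t` whose parameters `(s, t)` have
law `w`. -/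
def slopeLaw (w : Fˣ × F → ℝ) (s : Fˣ) : ℝ := ∑ t, w (s, t)

/-- The Fourier transform of the conditional law of the intercept, scaled by the mass of the slope
`s`: the coefficients of averaging over affine maps on the Fourier side. -/
noncomputable def slopeCoeff (ψ : AddChar F ℂ) (w : Fˣ × F → ℝ) (s : Fˣ) (ξ : F) : ℂ :=
  fourierSum ψ (fun t => w (s, t)) ξ

theorem norm_slopeCoeff_le (hw : 0 ≤ w) (s : Fˣ) (ξ : F) :
    ‖slopeCoeff ψ w s ξ‖ ≤ slopeLaw w s :=
  norm_sum_le_of_le _ fun t _ => by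
    rw [norm_smul_of_nonneg (hw _), AddChar.norm_apply, mul_one]

variable [DecidableEq F]

theorem slopeLaw_mem_stdSimplex (hw : w ∈ stdSimplex ℝ (Fˣ × F)) :
    slopeLaw w ∈ stdSimplex ℝ Fˣ :=
  ⟨fun _ => sum_nonneg fun _ _ => hw.1 _, (Fintype.sum_prod_type w).symm.trans hw.2⟩

theorem norm_sq_twistedAvg_slopeCoeff_le (hw : w ∈ stdSimplex ℝ (Fˣ × F)) {k i : ℕ}
    (hki : k + 1 ≤ 2 ^ i) {τ b : ℝ}
    (hτ : ∀ ξ ≠ 0, ‖unitSum ψ (convPow (ratioLaw (slopeLaw w)) k) ξ‖ ≤ τ) (hb : 0 ≤ b)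
    (hτb : ∑ s, √(∑ t, w (s, t) ^ 2) + √τ ≤ b ^ 2 ^ (i + 1)) {f : EuclideanSpace ℂ F}
    (hf : f 0 = 0) : ‖twistedAvg (slopeCoeff ψ w) f‖ ^ 2 ≤ b * ‖f‖ ^ 2 := by
  have hσ := slopeLaw_mem_stdSimplex hw
  have hμ := ratioLaw_mem_stdSimplex hσ
  refine norm_sq_twistedAvg_le hσ (norm_slopeCoeff_le hw.1) hb i fun y hy => le_trans ?_ hτb
  have hy0 : y ≠ 0 := by
    rintro rfl
    exact hy hf
  calc ∑ s, ∑ u, convPow (ratioLaw (slopeLaw w)) (2 ^ i - 1) u *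
          ‖slopeCoeff ψ w s (s⁻¹ • u • y)‖
      ≤ ∑ s, (√(∑ t, w (s, t) ^ 2) + √τ * slopeLaw w s) := by
        refine sum_le_sum fun s _ => ?_
        simp only [smul_comm s⁻¹]
        exact sum_mul_norm_fourierSum_smul_le (convPow_mem_stdSimplex hμ _)
          (norm_unitSum_convPow_le_of_le hμ (by omega) hτ) (fun t => hw.1 (s, t))
          (smul_ne_zero_iff_ne _ |>.2 hy0)
    _ = ∑ s, √(∑ t, w (s, t) ^ 2) + √τ := by
        rw [sum_add_distrib, ← mul_sum, hσ.2, mul_one]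

/-- The average of the push-forwards of `f` under the affine maps `x ↦ s * x + t`, with weights
`w (s, t)`. -/
def affineConv (w : Fˣ × F → ℝ) (f : F → ℝ) (y : F) : ℝ :=
  ∑ g, w g * f (g.1⁻¹ • (y - g.2))

theorem sum_affineConv_smul {E : Type*} [AddCommGroup E] [Module ℝ E] (w : Fˣ × F → ℝ)
    (f : F → ℝ) (φ : F → E) :
    ∑ y, affineConv w f y • φ y = ∑ g, w g • ∑ x, f x • φ (g.1 • x + g.2) := by
  simp only [affineConv, sum_smul, smul_sum]
  rw [sum_comm]
  refine sum_congr rfl fun g _ => ?_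
  rw [← Equiv.sum_comp ((MulAction.toPerm g.1).trans (Equiv.addRight g.2))]
  refine sum_congr rfl fun x _ => ?_
  simp only [Equiv.trans_apply, MulAction.toPerm_apply, Equiv.coe_addRight, add_sub_cancel_right,
    inv_smul_smul, mul_smul]

theorem fourierSum_affineConv (w : Fˣ × F → ℝ) (f : F → ℝ) :
    WithLp.toLp 2 (fourierSum ψ (affineConv w f)) =
      twistedAvg (slopeCoeff ψ w) (WithLp.toLp 2 (fourierSum ψ f)) := by
  ext ξ
  simp only [twistedAvg, slopeCoeff]
  rw [fourierSum, sum_affineConv_smul, Fintype.sum_prod_type]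
  refine sum_congr rfl fun s _ => ?_
  rw [fourierSum, sum_mul]
  refine sum_congr rfl fun t _ => ?_
  rw [smul_mul_assoc, fourierSum, mul_sum]
  congr 1
  refine sum_congr rfl fun x _ => ?_
  rw [add_mul, AddChar.map_add_eq_mul, mul_smul_comm, mul_comm (ψ _), Units.smul_def,
    Units.smul_def, smul_eq_mul, smul_eq_mul, mul_right_comm, mul_comm x]

theorem sum_affineConv_sq_le (hψ : ψ.IsPrimitive) (hw : w ∈ stdSimplex ℝ (Fˣ × F)) {k i : ℕ}
    (hki : k + 1 ≤ 2 ^ i) {τ b : ℝ}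
    (hτ : ∀ ξ ≠ 0, ‖unitSum ψ (convPow (ratioLaw (slopeLaw w)) k) ξ‖ ≤ τ) (hb : 0 ≤ b)
    (hτb : ∑ s, √(∑ t, w (s, t) ^ 2) + √τ ≤ b ^ 2 ^ (i + 1)) {f : F → ℝ} (hf : ∑ x, f x = 0) :
    ∑ y, affineConv w f y ^ 2 ≤ b * ∑ x, f x ^ 2 := by
  have plancherel (f : F → ℝ) :
      ‖WithLp.toLp 2 (fourierSum ψ f)‖ ^ 2 = Fintype.card F * ∑ x, f x ^ 2 := by
    rw [EuclideanSpace.norm_sq_eq, ← sum_norm_fourierSum_sq hψ]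
  have gap := norm_sq_twistedAvg_slopeCoeff_le hw hki hτ hb hτb
    (f := WithLp.toLp 2 (fourierSum ψ f))
    (by simpa [fourierSum] using congrArg Complex.ofReal hf)
  rw [← fourierSum_affineConv, plancherel, plancherel, mul_left_comm] at gap
  exact le_of_mul_le_mul_left gap (Nat.cast_pos.2 Fintype.card_pos)

theorem sum_affineConv (hw : w ∈ stdSimplex ℝ (Fˣ × F)) (f : F → ℝ) :
    ∑ y, affineConv w f y = ∑ x, f x := by
  simpa [← sum_mul, hw.2] using sum_affineConv_smul w f fun _ => (1 : ℝ)

theorem affineConv_sub_const (hw : w ∈ stdSimplex ℝ (Fˣ × F)) (f : F → ℝ) (c : ℝ) (y : F) :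
    affineConv w (fun x => f x - c) y = affineConv w f y - c := by
  simp only [affineConv, mul_sub, sum_sub_distrib, ← sum_mul, hw.2, one_mul]

theorem sum_affineConv_sq_le_add (hw : w ∈ stdSimplex ℝ (Fˣ × F)) {b : ℝ} (hb : 0 ≤ b)
    (hgap : ∀ f : F → ℝ, ∑ x, f x = 0 → ∑ y, affineConv w f y ^ 2 ≤ b * ∑ x, f x ^ 2)
    (f : F → ℝ) :
    Fintype.card F * ∑ y, affineConv w f y ^ 2 ≤
      (∑ x, f x) ^ 2 + b * Fintype.card F * ∑ x, f x ^ 2 := by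
  have hq : (0 : ℝ) < Fintype.card F := Nat.cast_pos.2 Fintype.card_pos
  set q := (Fintype.card F : ℝ)
  set m : ℝ := (∑ x, f x) / q with hm
  have variance (h : F → ℝ) (hh : ∑ x, h x = ∑ x, f x) :
      q * ∑ x, (h x - m) ^ 2 = q * ∑ x, h x ^ 2 - (∑ x, f x) ^ 2 := by
    simp only [sub_sq, sum_add_distrib, sum_sub_distrib, ← sum_mul, ← mul_sum, hh, sum_const,
      card_univ, nsmul_eq_mul]
    rw [hm]
    field_simp
    ring
  have mean_zero : ∑ x, (f x - m) = 0 := by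
    rw [sum_sub_distrib, sum_const, card_univ, nsmul_eq_mul, hm, mul_div_cancel₀ _ hq.ne', sub_self]
  have centered := hgap _ mean_zero
  simp only [affineConv_sub_const hw] at centered
  have := mul_le_mul_of_nonneg_left centered hq.le
  rw [variance _ (sum_affineConv hw f), mul_left_comm, variance f rfl] at this
  nlinarith [mul_nonneg hb (sq_nonneg (∑ x, f x))]

theorem card_mul_card_le_of_sum_affineConv_sq_le (hw : w ∈ stdSimplex ℝ (Fˣ × F)) {b : ℝ}
    (hb : 0 ≤ b)
    (hgap : ∀ f : F → ℝ, ∑ x, f x = 0 → ∑ y, affineConv w f y ^ 2 ≤ b * ∑ x, f x ^ 2)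
    {X Y : Finset F} (hXY : ∀ g, w g ≠ 0 → ∀ x ∈ X, g.1 • x + g.2 ∈ Y) :
    (#X : ℝ) * Fintype.card F ≤ #Y * (#X + b * Fintype.card F) := by
  obtain rfl | hX := X.eq_empty_or_nonempty
  · simp only [card_empty, Nat.cast_zero, zero_mul]
    positivity
  set χ : F → ℝ := fun x => if x ∈ X then 1 else 0 with hχ
  have sum_χ : ∑ x, χ x = #X := by simp [hχ]
  have sum_χ_sq : ∑ x, χ x ^ 2 = #X := by simp [hχ]
  have support (y : F) (hy : y ∉ Y) : affineConv w χ y = 0 := by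
    refine sum_eq_zero fun g _ => ?_
    by_contra! hg
    have hgX : g.1⁻¹ • (y - g.2) ∈ X := by
      by_contra h
      exact hg (by simp [hχ, h])
    exact hy (by simpa using hXY g (left_ne_zero_of_mul hg) _ hgX)
  have mass_Y : ∑ y ∈ Y, affineConv w χ y = #X := by
    rw [← sum_χ, ← sum_affineConv hw]
    exact sum_subset (subset_univ _) fun y _ => support y
  have cauchy : (#X : ℝ) ^ 2 ≤ #Y * ∑ y, affineConv w χ y ^ 2 := by
    rw [← mass_Y]
    refine sq_sum_le_card_mul_sum_sq.trans (mul_le_mul_of_nonneg_left ?_ (Nat.cast_nonneg _))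
    exact sum_le_univ_sum_of_nonneg fun _ => sq_nonneg _
  have flattening := sum_affineConv_sq_le_add hw hb hgap χ
  rw [sum_χ, sum_χ_sq] at flattening
  refine le_of_mul_le_mul_right ?_ (Nat.cast_pos (α := ℝ).2 hX.card_pos)
  calc (#X : ℝ) * Fintype.card F * #X = Fintype.card F * (#X : ℝ) ^ 2 := by ring
    _ ≤ Fintype.card F * (#Y * ∑ y, affineConv w χ y ^ 2) := by gcongr
    _ = #Y * (Fintype.card F * ∑ y, affineConv w χ y ^ 2) := mul_left_comm _ _ _
    _ ≤ #Y * ((#X : ℝ) ^ 2 + b * Fintype.card F * #X) := by gcongr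
    _ = #Y * (#X + b * Fintype.card F) * #X := by ring

end AffineAverage

/-! ### Expansion of the rational map -/

theorem exists_sum_affineConv_sq_le {ε : ℝ} (hε : 0 < ε) :
    ∃ δ : ℝ, 0 < δ ∧ ∃ p₀ : ℕ, ∀ (p : ℕ) [Fact p.Prime], p₀ ≤ p →
      ∀ w ∈ stdSimplex ℝ ((ZMod p)ˣ × ZMod p),
        (∀ s, slopeLaw w s ≤ (p : ℝ) ^ (-ε)) →
        ∑ s, √(∑ t, w (s, t) ^ 2) ≤ (p : ℝ) ^ (-ε) →
        ∀ f : ZMod p → ℝ, ∑ x, f x = 0 →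
          ∑ y, affineConv w f y ^ 2 ≤ (p : ℝ) ^ (-δ) * ∑ x, f x ^ 2 := by
  obtain ⟨k, γ, hγ, p₁, bgk⟩ := exists_norm_unitSum_convPow_le hε
  set η := min ε (γ / 2)
  have hη0 : 0 < η := lt_min hε (by positivity)
  obtain ⟨p₂, hp₂⟩ := exists_forall_le_natCast_rpow (half_pos hη0) 2
  refine ⟨η / 2 / 2 ^ (k + 1), by positivity, max p₁ p₂, fun p _ hp w hw hslope hfibre f hf => ?_⟩
  have hp1 : (1 : ℝ) ≤ p := by exact_mod_cast (Fact.out : p.Prime).one_le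
  have hp0 : (0 : ℝ) < p := by linarith
  have hσ := slopeLaw_mem_stdSimplex hw
  have hτ := bgk p (le_of_max_le_left hp) _ (ratioLaw_mem_stdSimplex hσ)
    (smulConv_le hσ fun s => hslope s⁻¹) ZMod.stdAddChar (ZMod.isPrimitive_stdAddChar p)
  refine sum_affineConv_sq_le (ZMod.isPrimitive_stdAddChar p) hw (i := k) Nat.lt_two_pow_self hτ
    (by positivity) ?_ hf
  calc ∑ s, √(∑ t, w (s, t) ^ 2) + √((p : ℝ) ^ (-γ))
      ≤ (p : ℝ) ^ (-ε) + (p : ℝ) ^ (-(γ / 2)) := by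
        rw [Real.sqrt_eq_rpow, ← Real.rpow_mul hp0.le]
        gcongr
        exact le_of_eq (by ring)
    _ ≤ (p : ℝ) ^ (-η) + (p : ℝ) ^ (-η) := by
        gcongr
        exacts [min_le_left _ _, min_le_right _ _]
    _ = 2 * (p : ℝ) ^ (-η) := (two_mul _).symm
    _ ≤ (p : ℝ) ^ (η / 2) * (p : ℝ) ^ (-η) :=
        mul_le_mul_of_nonneg_right (hp₂ p (le_of_max_le_right hp)) (by positivity)
    _ = ((p : ℝ) ^ (-(η / 2 / 2 ^ (k + 1)))) ^ 2 ^ (k + 1) := by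
        rw [← Real.rpow_add hp0, ← Real.rpow_natCast, ← Real.rpow_mul hp0.le]
        push_cast
        field_simp
        ring_nf

section UniformWeight

variable {ι : Type*} [DecidableEq ι]

/-- The uniform probability weight on a finite set. -/
noncomputable def uniformWeight (G : Finset ι) (g : ι) : ℝ := if g ∈ G then (#G : ℝ)⁻¹ else 0

theorem uniformWeight_ne_zero_iff {G : Finset ι} {g : ι} : uniformWeight G g ≠ 0 ↔ g ∈ G := by
  refine ⟨fun h => by_contra fun hg => h (if_neg hg), fun hg => ?_⟩
  rw [uniformWeight, if_pos hg]
  exact inv_ne_zero (Nat.cast_ne_zero.2 (card_ne_zero_of_mem hg))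

variable [Fintype ι]

theorem uniformWeight_mem_stdSimplex {G : Finset ι} (hG : G.Nonempty) :
    uniformWeight G ∈ stdSimplex ℝ ι := by
  refine ⟨fun g => ?_, ?_⟩
  · rw [uniformWeight]
    positivity
  · simp [uniformWeight, hG.ne_empty]

theorem sum_uniformWeight_sq (G : Finset ι) : ∑ g, uniformWeight G g ^ 2 = (#G : ℝ)⁻¹ := by
  obtain rfl | hG := G.eq_empty_or_nonempty
  · simp [uniformWeight]
  · have : (#G : ℝ) ≠ 0 := Nat.cast_ne_zero.2 hG.card_ne_zero
    simp only [uniformWeight, ite_pow, sum_ite_mem, univ_inter, sum_const, nsmul_eq_mul,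
      zero_pow two_ne_zero]
    field_simp

end UniformWeight

section AffineFamily

variable {F : Type*} [Field F] [Fintype F] [DecidableEq F]

theorem slopeLaw_uniformWeight (G : Finset (Fˣ × F)) (s : Fˣ) :
    slopeLaw (uniformWeight G) s = #{g ∈ G | g.1 = s} / #G := by
  have card_fibre : #{t | (s, t) ∈ G} = #{g ∈ G | g.1 = s} := by
    refine card_bij' (fun t _ => (s, t)) (fun g _ => g.2) ?_ ?_ ?_ ?_ <;> grind
  rw [← card_fibre, slopeLaw]
  simp [uniformWeight, ← sum_filter, div_eq_mul_inv]

theorem sum_sqrt_sum_uniformWeight_sq_le (G : Finset (Fˣ × F)) :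
    ∑ s, √(∑ t, uniformWeight G (s, t) ^ 2) ≤ √(#(G.image Prod.fst) / #G) := by
  refine Real.le_sqrt_of_sq_le ?_
  set I := G.image Prod.fst
  have support (s : Fˣ) (hs : s ∉ I) : √(∑ t, uniformWeight G (s, t) ^ 2) = 0 := by
    have (t : F) : (s, t) ∉ G := fun h => hs (mem_image_of_mem Prod.fst h)
    simp [uniformWeight, this]
  calc (∑ s, √(∑ t, uniformWeight G (s, t) ^ 2)) ^ 2
      = (∑ s ∈ I, √(∑ t, uniformWeight G (s, t) ^ 2)) ^ 2 := by
        rw [sum_subset (subset_univ I) fun s _ => support s]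
    _ ≤ #I * ∑ s ∈ I, √(∑ t, uniformWeight G (s, t) ^ 2) ^ 2 := sq_sum_le_card_mul_sum_sq
    _ ≤ #I * ∑ s, √(∑ t, uniformWeight G (s, t) ^ 2) ^ 2 := by
        gcongr
        exact subset_univ I
    _ = #I * ∑ g, uniformWeight G g ^ 2 := by
        rw [Fintype.sum_prod_type]
        congr! 2 with s
        exact Real.sq_sqrt (sum_nonneg fun t _ => sq_nonneg _)
    _ = #I / #G := by rw [sum_uniformWeight_sq, div_eq_mul_inv]

/-- The parameters of the affine maps `x ↦ (b₃ - r * b₂) * x + b₂` of nonzero slope, with `b₂ ∈ B₂`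
and `b₃ ∈ B₃`. At `x = (a + r)⁻¹` such a map takes the value `(a * b₂ + b₃) / (a + r)`. -/
def affineFamily (r : F) (B₂ B₃ : Finset F) : Finset (Fˣ × F) :=
  {g | g.2 ∈ B₂ ∧ g.1 + r * g.2 ∈ B₃}

variable {r : F} {B₁ B₂ B₃ : Finset F}

theorem mem_affineFamily {g : Fˣ × F} :
    g ∈ affineFamily r B₂ B₃ ↔ g.2 ∈ B₂ ∧ g.1 + r * g.2 ∈ B₃ := by
  simp [affineFamily]

theorem card_mul_card_le_card_affineFamily_add (r : F) (B₂ B₃ : Finset F) :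
    #B₂ * #B₃ ≤ #(affineFamily r B₂ B₃) + #B₂ := by
  have cover : B₂ ×ˢ B₃ ⊆ (affineFamily r B₂ B₃).image (fun g => (g.2, g.1 + r * g.2)) ∪
      B₂.image fun b => (b, r * b) := by
    rintro ⟨b, d⟩ hbd
    obtain ⟨hb, hd⟩ := mem_product.1 hbd
    rw [mem_union, mem_image, mem_image]
    by_cases h : d = r * b
    · exact Or.inr ⟨b, hb, by rw [h]⟩
    · refine Or.inl ⟨(Units.mk0 (d - r * b) (sub_ne_zero.2 h), b), ?_, ?_⟩
      · simpa [mem_affineFamily] using ⟨hb, hd⟩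
      · simp
  grw [← card_product, card_le_card cover, card_union_le, card_image_le, card_image_le]

theorem half_card_mul_card_le_card_affineFamily (r : F) (B₂ : Finset F) (hB₃ : 1 < #B₃) :
    (#B₂ * #B₃ : ℝ) / 2 ≤ #(affineFamily r B₂ B₃) := by
  have hcard : (#B₂ * #B₃ : ℝ) ≤ #(affineFamily r B₂ B₃) + #B₂ := by
    exact_mod_cast card_mul_card_le_card_affineFamily_add r B₂ B₃
  have htwo : (2 : ℝ) ≤ #B₃ := by exact_mod_cast hB₃
  nlinarith [mul_le_mul_of_nonneg_left htwo (Nat.cast_nonneg (α := ℝ) #B₂)]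

theorem card_filter_affineFamily_fst_eq_le (r : F) (B₂ B₃ : Finset F) (s : Fˣ) :
    #{g ∈ affineFamily r B₂ B₃ | g.1 = s} ≤ #B₂ := by
  refine card_le_card_of_injOn Prod.snd ?_ ?_
  · exact fun g hg => (mem_affineFamily.1 (mem_filter.1 hg).1).1
  · exact fun g hg h hh hgh =>
      Prod.ext ((mem_filter.1 hg).2.trans (mem_filter.1 hh).2.symm) hgh

theorem card_image_fst_affineFamily_le (hr : r ∈ B₁) (B₂ B₃ : Finset F) :
    #((affineFamily r B₂ B₃).image Prod.fst) ≤ #(B₃ - B₁ * B₂) := by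
  refine card_le_card_of_injOn Units.val ?_ Units.val_injective.injOn
  intro s hs
  obtain ⟨g, hg, rfl⟩ := mem_image.1 hs
  obtain ⟨hg₂, hg₃⟩ := mem_affineFamily.1 hg
  exact mem_sub.2 ⟨_, hg₃, _, mul_mem_mul hr hg₂, add_sub_cancel_right _ _⟩

theorem slopeLaw_uniformWeight_affineFamily_le (r : F) (hB₂ : B₂.Nonempty) (hB₃ : 1 < #B₃)
    (s : Fˣ) : slopeLaw (uniformWeight (affineFamily r B₂ B₃)) s ≤ 2 * (#B₃ : ℝ)⁻¹ := by
  have : (0 : ℝ) < #B₂ := Nat.cast_pos.2 hB₂.card_pos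
  have : (0 : ℝ) < #B₃ := Nat.cast_pos.2 (by omega)
  calc slopeLaw (uniformWeight (affineFamily r B₂ B₃)) s
      ≤ #B₂ / (#B₂ * #B₃ / 2 : ℝ) := by
        rw [slopeLaw_uniformWeight]
        gcongr
        · exact card_filter_affineFamily_fst_eq_le r B₂ B₃ s
        · exact half_card_mul_card_le_card_affineFamily r B₂ hB₃
    _ = 2 * (#B₃ : ℝ)⁻¹ := by field_simp

theorem sum_sqrt_sum_uniformWeight_affineFamily_sq_le (hr : r ∈ B₁) (hB₂ : B₂.Nonempty)
    (hB₃ : 1 < #B₃) {κ : ℝ} (hdiff : (#(B₃ - B₁ * B₂) : ℝ) ≤ #B₂ * #B₃ * κ) :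
    ∑ s, √(∑ t, uniformWeight (affineFamily r B₂ B₃) (s, t) ^ 2) ≤ √(2 * κ) := by
  have : (0 : ℝ) < #B₂ := Nat.cast_pos.2 hB₂.card_pos
  have : (0 : ℝ) < #B₃ := Nat.cast_pos.2 (by omega)
  refine (sum_sqrt_sum_uniformWeight_sq_le _).trans (Real.sqrt_le_sqrt ?_)
  calc (#((affineFamily r B₂ B₃).image Prod.fst) / #(affineFamily r B₂ B₃) : ℝ)
      ≤ #(B₃ - B₁ * B₂) / (#B₂ * #B₃ / 2) := by
        gcongr
        · exact card_image_fst_affineFamily_le hr B₂ B₃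
        · exact half_card_mul_card_le_card_affineFamily r B₂ hB₃
    _ ≤ #B₂ * #B₃ * κ / (#B₂ * #B₃ / 2) := by gcongr
    _ = 2 * κ := by field_simp

theorem affineFamily_nonempty (r : F) (hB₂ : B₂.Nonempty) (hB₃ : 1 < #B₃) :
    (affineFamily r B₂ B₃).Nonempty := by
  have := card_mul_card_le_card_affineFamily_add r B₂ B₃
  have := hB₂.card_pos
  exact card_pos.1 (by nlinarith)

end AffineFamily

theorem exists_sum_affineConv_affineFamily_sq_le {ε : ℝ} (hε : 0 < ε) :
    ∃ δ : ℝ, 0 < δ ∧ ∃ p₀ : ℕ, ∀ (p : ℕ) [Fact p.Prime], p₀ ≤ p →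
      ∀ (B₁ B₂ B₃ : Finset (ZMod p)), ∀ r ∈ B₁, B₂.Nonempty → (p : ℝ) ^ ε < #B₃ →
        (#(B₃ - B₁ * B₂) : ℝ) ≤ #B₂ * #B₃ * (p : ℝ) ^ (-ε) →
        ∀ f : ZMod p → ℝ, ∑ x, f x = 0 →
          ∑ y, affineConv (uniformWeight (affineFamily r B₂ B₃)) f y ^ 2 ≤
            (p : ℝ) ^ (-δ) * ∑ x, f x ^ 2 := by
  obtain ⟨δ, hδ, p₁, hgap⟩ := exists_sum_affineConv_sq_le (ε := ε / 4) (by positivity)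
  obtain ⟨p₂, hp₂⟩ := exists_forall_le_natCast_rpow (half_pos hε) 2
  refine ⟨δ, hδ, max p₁ p₂, fun p _ hp B₁ B₂ B₃ r hr hB₂ hB₃ hdiff => ?_⟩
  have hp1 : (1 : ℝ) ≤ p := by exact_mod_cast (Fact.out : p.Prime).one_le
  have hp0 : (0 : ℝ) < p := by linarith
  have two_mul_le : 2 * (p : ℝ) ^ (-ε) ≤ (p : ℝ) ^ (-(ε / 2)) := by
    grw [hp₂ p (le_of_max_le_right hp), ← Real.rpow_add hp0]
    exact le_of_eq (by ring_nf)
  have hB₃one : 1 < #B₃ := by exact_mod_cast (Real.one_le_rpow hp1 hε.le).trans_lt hB₃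
  refine hgap p (le_of_max_le_left hp) _
    (uniformWeight_mem_stdSimplex (affineFamily_nonempty r hB₂ hB₃one)) (fun s => ?_) ?_
  · calc slopeLaw (uniformWeight (affineFamily r B₂ B₃)) s
        ≤ 2 * (#B₃ : ℝ)⁻¹ := slopeLaw_uniformWeight_affineFamily_le r hB₂ hB₃one s
      _ ≤ 2 * (p : ℝ) ^ (-ε) := by
          rw [Real.rpow_neg hp0.le]
          gcongr
      _ ≤ (p : ℝ) ^ (-(ε / 2)) := two_mul_le
      _ ≤ (p : ℝ) ^ (-(ε / 4)) := by
          gcongr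
          norm_num
  · calc _ ≤ √(2 * (p : ℝ) ^ (-ε)) :=
          sum_sqrt_sum_uniformWeight_affineFamily_sq_le hr hB₂ hB₃one hdiff
      _ ≤ √((p : ℝ) ^ (-(ε / 2))) := by gcongr
      _ = (p : ℝ) ^ (-(ε / 4)) := by
          rw [Real.sqrt_eq_rpow, ← Real.rpow_mul hp0.le]
          ring_nf

section ValueSet

variable {F : Type*} [Field F] [DecidableEq F] {A B₁ B₂ B₃ : Finset F} {r : F}

/-- The values of `(a + b₁) / (a * b₂ + b₃)` over the tuples with nonzero denominator. -/
def valueSet (A B₁ B₂ B₃ : Finset F) : Finset F :=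
  ((A ×ˢ B₁ ×ˢ B₂ ×ˢ B₃).filter fun x => x.1 * x.2.2.1 + x.2.2.2 ≠ 0).image fun x =>
    (x.1 + x.2.1) * (x.1 * x.2.2.1 + x.2.2.2)⁻¹

theorem mul_inv_mem_valueSet {a b₁ b₂ b₃ : F} (ha : a ∈ A) (hb₁ : b₁ ∈ B₁) (hb₂ : b₂ ∈ B₂)
    (hb₃ : b₃ ∈ B₃) (h : a * b₂ + b₃ ≠ 0) :
    (a + b₁) * (a * b₂ + b₃)⁻¹ ∈ valueSet A B₁ B₂ B₃ :=
  mem_image.2 ⟨(a, b₁, b₂, b₃), by simp [ha, hb₁, hb₂, hb₃, h], rfl⟩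

theorem valueSet_nonempty (hA : A.Nonempty) (hB₁ : B₁.Nonempty) (hB₂ : B₂.Nonempty)
    (hB₃ : 1 < #B₃) : (valueSet A B₁ B₂ B₃).Nonempty := by
  obtain ⟨a, ha⟩ := hA
  obtain ⟨b₁, hb₁⟩ := hB₁
  obtain ⟨b₂, hb₂⟩ := hB₂
  obtain ⟨b₃, hb₃, hne⟩ := exists_mem_ne hB₃ (-(a * b₂))
  exact ⟨_, mul_inv_mem_valueSet ha hb₁ hb₂ hb₃ fun h => hne (eq_neg_of_add_eq_zero_right h)⟩

theorem exists_mem_card_le_two_mul_card_erase (A : Finset F) {B : Finset F} (hB : 1 < #B) :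
    ∃ r ∈ B, #A ≤ 2 * #(A.erase (-r)) := by
  obtain ⟨r, hr, s, hs, hrs⟩ := one_lt_card.1 hB
  have hunion : A ⊆ A.erase (-r) ∪ A.erase (-s) := by
    intro a ha
    have : a ≠ -r ∨ a ≠ -s := by grind
    simpa [ha] using this
  have hcard := (card_le_card hunion).trans (card_union_le _ _)
  rcases le_total #(A.erase (-r)) #(A.erase (-s)) with hle | hle
  · exact ⟨s, hs, by omega⟩
  · exact ⟨r, hr, by omega⟩

variable [Fintype F]

theorem smul_inv_add_mem_insert_inv_valueSet {a : F} (ha : a ∈ A) (hr : r ∈ B₁) (har : a + r ≠ 0)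
    {g : Fˣ × F} (hg : g ∈ affineFamily r B₂ B₃) :
    g.1 • (a + r)⁻¹ + g.2 ∈ insert 0 (valueSet A B₁ B₂ B₃)⁻¹ := by
  obtain ⟨hg₂, hg₃⟩ := mem_affineFamily.1 hg
  have substitution : g.1 • (a + r)⁻¹ + g.2 = (a * g.2 + (g.1 + r * g.2)) / (a + r) := by
    rw [Units.smul_def, smul_eq_mul]
    field_simp
    ring
  rw [substitution, mem_insert, div_eq_zero_iff, mem_inv', inv_div, div_eq_mul_inv]
  by_cases h : a * g.2 + (g.1 + r * g.2) = 0
  · exact Or.inl (Or.inl h)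
  · exact Or.inr (mul_inv_mem_valueSet ha hr hg₂ hg₃ h)

theorem card_erase_mul_card_le (hr : r ∈ B₁) (hG : (affineFamily r B₂ B₃).Nonempty) {b : ℝ}
    (hb : 0 ≤ b) (hgap : ∀ f : F → ℝ, ∑ x, f x = 0 →
      ∑ y, affineConv (uniformWeight (affineFamily r B₂ B₃)) f y ^ 2 ≤ b * ∑ x, f x ^ 2)
    (A : Finset F) :
    (#(A.erase (-r)) : ℝ) * Fintype.card F ≤
      (#(valueSet A B₁ B₂ B₃) + 1) * (#(A.erase (-r)) + b * Fintype.card F) := by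
  set X := (A.erase (-r)).image fun a => (a + r)⁻¹
  have card_X : #X = #(A.erase (-r)) :=
    card_image_of_injective _ (inv_injective.comp (add_left_injective r))
  have card_Y : (#(insert 0 (valueSet A B₁ B₂ B₃)⁻¹) : ℝ) ≤ #(valueSet A B₁ B₂ B₃) + 1 := by
    have := card_insert_le 0 (valueSet A B₁ B₂ B₃)⁻¹
    rw [card_inv] at this
    exact_mod_cast this
  have count := card_mul_card_le_of_sum_affineConv_sq_le (uniformWeight_mem_stdSimplex hG) hb hgap
    (X := X) (Y := insert 0 (valueSet A B₁ B₂ B₃)⁻¹) (by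
      intro g hg x hx
      obtain ⟨a, ha, rfl⟩ := mem_image.1 hx
      exact smul_inv_add_mem_insert_inv_valueSet (mem_of_mem_erase ha) hr
        (fun h => ne_of_mem_erase ha (eq_neg_of_add_eq_zero_left h))
        (uniformWeight_ne_zero_iff.1 hg))
  rw [card_X] at count
  grw [count, card_Y]

end ValueSet

theorem min_le_three_mul_of_mul_le {q a N b V : ℝ} (hq : 0 < q) (hb : 0 < b) (hN : 0 ≤ N)
    (haN : a ≤ 2 * N) (hV : N * q ≤ (V + 1) * (N + b * q)) :
    min q (a * b⁻¹) ≤ 3 * (V + 1) := by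
  set M := min q (a * b⁻¹)
  have hMb : M * b ≤ 2 * N :=
    (mul_le_mul_of_nonneg_right (min_le_right _ _) hb.le).trans
      (by rwa [inv_mul_cancel_right₀ hb.ne'])
  refine le_of_mul_le_mul_right ?_ (by positivity : 0 < N + b * q)
  calc M * (N + b * q) = M * N + M * b * q := by ring
    _ ≤ q * N + 2 * N * q := by
        gcongr
        exact min_le_left _ _
    _ = 3 * (N * q) := by ring
    _ ≤ 3 * ((V + 1) * (N + b * q)) := by gcongr
    _ = 3 * (V + 1) * (N + b * q) := by ring

theorem exists_min_le_six_mul_card_valueSet {ε : ℝ} (hε : 0 < ε) :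
    ∃ δ : ℝ, 0 < δ ∧ ∃ p₀ : ℕ, ∀ (p : ℕ) [Fact p.Prime], p₀ ≤ p →
      ∀ A B₁ B₂ B₃ : Finset (ZMod p), A.Nonempty → 1 < #B₁ → B₂.Nonempty → (p : ℝ) ^ ε < #B₃ →
        (#(B₃ - B₁ * B₂) : ℝ) ≤ #B₂ * #B₃ * (p : ℝ) ^ (-ε) →
        min (p : ℝ) (#A * (p : ℝ) ^ δ) ≤ 6 * #(valueSet A B₁ B₂ B₃) := by
  obtain ⟨δ, hδ, p₀, hgap⟩ := exists_sum_affineConv_affineFamily_sq_le hε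
  refine ⟨δ, hδ, p₀, fun p _ hp A B₁ B₂ B₃ hA hB₁ hB₂ hB₃ hdiff => ?_⟩
  have hp1 : (1 : ℝ) ≤ p := by exact_mod_cast (Fact.out : p.Prime).one_le
  have hB₃one : 1 < #B₃ := by exact_mod_cast (Real.one_le_rpow hp1 hε.le).trans_lt hB₃
  obtain ⟨r, hr, hrA⟩ := exists_mem_card_le_two_mul_card_erase A hB₁
  have count := card_erase_mul_card_le hr (affineFamily_nonempty r hB₂ hB₃one) (by positivity)
    (hgap p hp B₁ B₂ B₃ r hr hB₂ hB₃ hdiff) A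
  rw [ZMod.card] at count
  have bound := min_le_three_mul_of_mul_le (by positivity) (by positivity) (Nat.cast_nonneg _)
    (a := #A) (by exact_mod_cast hrA) count
  rw [Real.rpow_neg (by positivity), inv_inv] at bound
  have hV : (1 : ℝ) ≤ #(valueSet A B₁ B₂ B₃) := by
    exact_mod_cast (valueSet_nonempty hA ⟨r, hr⟩ hB₂ hB₃one).card_pos
  linarith

theorem stmt17_general {ε : ℝ} (hε : 0 < ε) :
    ∃ δ : ℝ, 0 < δ ∧ ∃ c : ℝ, 0 < c ∧ ∀ (p : ℕ) [Fact p.Prime] (A B₁ B₂ B₃ : Finset (ZMod p)),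
      1 < #B₁ → B₂.Nonempty → (p : ℝ) ^ ε < #B₃ →
      (#(B₃ - B₁ * B₂) : ℝ) ≤ #B₂ * #B₃ * (p : ℝ) ^ (-ε) →
      c * min (p : ℝ) (#A * (p : ℝ) ^ δ) ≤ #(valueSet A B₁ B₂ B₃) := by
  obtain ⟨δ, hδ, p₀, hlarge⟩ := exists_min_le_six_mul_card_valueSet hε
  refine ⟨δ, hδ, ((6 : ℝ) + p₀)⁻¹, by positivity, fun p _ A B₁ B₂ B₃ hB₁ hB₂ hB₃ hdiff => ?_⟩
  obtain rfl | hA := A.eq_empty_or_nonempty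
  · simp
  have hp1 : (1 : ℝ) ≤ p := by exact_mod_cast (Fact.out : p.Prime).one_le
  have hB₃one : 1 < #B₃ := by exact_mod_cast (Real.one_le_rpow hp1 hε.le).trans_lt hB₃
  have hV : (1 : ℝ) ≤ #(valueSet A B₁ B₂ B₃) := by
    exact_mod_cast (valueSet_nonempty hA (card_pos.1 (by omega)) hB₂ hB₃one).card_pos
  rw [inv_mul_le_iff₀ (by positivity), add_mul]
  rcases le_total p₀ p with hp | hp
  · exact (hlarge p hp A B₁ B₂ B₃ hA hB₁ hB₂ hB₃ hdiff).trans
      (le_add_of_nonneg_right (by positivity))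
  · calc min (p : ℝ) (#A * (p : ℝ) ^ δ) ≤ p₀ := (min_le_left _ _).trans (Nat.cast_le.2 hp)
      _ ≤ p₀ * #(valueSet A B₁ B₂ B₃) := le_mul_of_one_le_right (Nat.cast_nonneg _) hV
      _ ≤ _ := le_add_of_nonneg_left (by positivity)

theorem stmt17 :
    ∀ ε : ℝ, 0 < ε →
      ∃ δ : ℝ, 0 < δ ∧ ∃ c : ℝ, 0 < c ∧
        ∀ (p : ℕ), p.Prime → Odd p →
          ∀ (A B1 B2 B3 : Finset (ZMod p)) (n : ℕ),
            B1.card = n → B2.card = n → B3.card = n →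
            (p : ℝ) ^ ε < (n : ℝ) →
            ((diffSet p B3 (prodSet p B1 B2)).card : ℝ) ≤ (n : ℝ) ^ 2 * (p : ℝ) ^ (-ε) →
            c * min (p : ℝ) ((A.card : ℝ) * (p : ℝ) ^ δ) ≤
              ((((A ×ˢ B1 ×ˢ B2 ×ˢ B3).filter fun x =>
                  x.1 * x.2.2.1 + x.2.2.2 ≠ 0).image fun x =>
                    (x.1 + x.2.1) * (x.1 * x.2.2.1 + x.2.2.2)⁻¹).card : ℝ) := by
  intro ε hε
  obtain ⟨δ, hδ, c, hc, hmain⟩ := stmt17_general hε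
  refine ⟨δ, hδ, c, hc, fun p hp _ A B1 B2 B3 n h1 h2 h3 hn hdiff => ?_⟩
  have : Fact p.Prime := ⟨hp⟩
  have hp1 : (1 : ℝ) ≤ p := by exact_mod_cast hp.one_le
  have hn1 : 1 < n := by exact_mod_cast (Real.one_le_rpow hp1 hε.le).trans_lt hn
  refine hmain p A B1 B2 B3 (h1 ▸ hn1) (card_pos.1 (by omega)) (h3 ▸ hn) ?_
  rw [h2, h3, ← sq]
  exact hdiff
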